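/- arXiv:2112.10405 — 2 statements merged into one kernel-verified Lean document; each statement's English description precedes it below -/
import Mathlib

section
/- For every p ∈ [0,1], every n ≥ 2 and every x > 0, the martingale M_n satisfies the concentration inequality ℙ(|M_n| ≥ x) ≤ 2·exp(−x²/(3n)). -/
open MeasureTheory ProbabilityTheory Filter Finset
open scoped BoundedContinuousFunction ENNReal NNReal Topology

noncomputable section

variable {Ω : Type*}

/-- Position of the elephant random walk: `S n = X 1 + ⋯ + X n`. -/
def erwS (X : ℕ → Ω → ℝ) (n : ℕ) (ω : Ω) : ℝ :=
  ∑ k ∈ Finset.Icc 1 n, X k ω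

/-- `V n = 4 ∑_{k=1}^{n-1} (S k / k)²`, the approximate conditional Fisher information. -/
def erwV (X : ℕ → Ω → ℝ) (n : ℕ) (ω : Ω) : ℝ :=
  4 * ∑ k ∈ Finset.Icc 1 (n - 1), (erwS X k ω / k) ^ 2

/-- The quasi-maximum likelihood estimator `p̂ n` of the memory parameter. -/
def erwPhat (X : ℕ → Ω → ℝ) (n : ℕ) (ω : Ω) : ℝ :=
  (∑ k ∈ Finset.Icc 1 (n - 1), (erwS X k ω / k) * (X (k + 1) ω + erwS X k ω / k)) /
    (2 * ∑ k ∈ Finset.Icc 1 (n - 1), (erwS X k ω / k) ^ 2)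

/-- The elephant random walk hypotheses with memory parameter `p ∈ [0,1]`:
the steps take values in `{-1, 1}`, are adapted to the filtration `ℱ`
(which plays the role of `σ(X_1, …, X_n)`), and
`E[X_{n+1} | ℱ_n] = (2p - 1) · S_n / n` almost surely. -/
def IsERW {m0 : MeasurableSpace Ω} (μ : Measure Ω) (ℱ : Filtration ℕ m0)
    (X : ℕ → Ω → ℝ) (p : ℝ) : Prop :=
  0 ≤ p ∧ p ≤ 1 ∧
  (∀ n, 1 ≤ n → ∀ ω, X n ω = 1 ∨ X n ω = -1) ∧
  (∀ n, 1 ≤ n → Measurable[ℱ n] (X n)) ∧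
  (∀ n, 1 ≤ n → μ[X (n + 1) | ℱ n] =ᵐ[μ] fun ω => (2 * p - 1) * (erwS X n ω / n))

/-- The martingale `M n = ∑_{k=1}^{n-1} (S k / k) ε_{k+1}` where `ε_{k+1} = X_{k+1} - a S_k / k`. -/
def erwM (X : ℕ → Ω → ℝ) (a : ℝ) (n : ℕ) (ω : Ω) : ℝ :=
  ∑ k ∈ Finset.Icc 1 (n - 1), (erwS X k ω / k) * (X (k + 1) ω - a * (erwS X k ω / k))

/-- Two-point Hoeffding lemma. -/
lemma two_point_hoeffding (m s : ℝ) (h1 : -1 ≤ m) (h2 : m ≤ 1) :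
    Real.exp (-(s * m)) * (Real.cosh s + m * Real.sinh s) ≤ Real.exp (s ^ 2 / 2) := by
  let ν : Measure ℝ := ENNReal.ofReal ((1 + m) / 2) • Measure.dirac 1 +
    ENNReal.ofReal ((1 - m) / 2) • Measure.dirac (-1)
  have hν : IsProbabilityMeasure ν := by
    constructor
    simp only [ν, Measure.coe_add, Pi.add_apply, Measure.smul_apply, measure_univ, smul_eq_mul,
      mul_one]
    rw [← ENNReal.ofReal_add (by linarith) (by linarith), ← ENNReal.ofReal_one]
    congr 1; ring
  have hint : ∀ f : ℝ → ℝ, ∫ y, f y ∂ν = (1 + m) / 2 * f 1 + (1 - m) / 2 * f (-1) := by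
    intro f
    have hd : ∀ a : ℝ, Integrable f (Measure.dirac a) := fun a =>
      integrable_dirac (by simp)
    rw [integral_add_measure ((hd _).smul_measure ENNReal.ofReal_ne_top)
      ((hd _).smul_measure ENNReal.ofReal_ne_top), integral_smul_measure, integral_smul_measure,
      integral_dirac, integral_dirac, ENNReal.toReal_ofReal (by linarith),
      ENNReal.toReal_ofReal (by linarith)]
    simp
  have hb : ∀ᵐ y ∂ν, id y ∈ Set.Icc (-1 : ℝ) 1 := by
    simp only [ν, ae_add_measure_iff]
    constructor
    · apply Measure.ae_smul_measure
      rw [ae_dirac_eq]; simp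
    · apply Measure.ae_smul_measure
      rw [ae_dirac_eq]; simp
  have H := (hasSubgaussianMGF_of_mem_Icc (μ := ν) aemeasurable_id hb).mgf_le s
  rw [mgf, hint, hint] at H
  simp only [id] at H
  have e1 : Real.exp (-(s * m)) * (Real.cosh s + m * Real.sinh s) =
      (1 + m) / 2 * Real.exp (s * (1 - m)) + (1 - m) / 2 * Real.exp (s * (-1 - m)) := by
    rw [Real.cosh_eq, Real.sinh_eq, show s * (1 - m) = -(s * m) + s by ring,
      show s * (-1 - m) = -(s * m) + -s by ring, Real.exp_add, Real.exp_add]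
    ring
  rw [e1]
  have e2 : (1 + m) / 2 * 1 + (1 - m) / 2 * -1 = m := by ring
  rw [e2] at H
  refine H.trans (le_of_eq ?_)
  congr 1
  norm_num

lemma erw_abs_Y {X : ℕ → Ω → ℝ} (hX : ∀ n, 1 ≤ n → ∀ ω, X n ω = 1 ∨ X n ω = -1)
    (k : ℕ) (ω : Ω) : |erwS X k ω / k| ≤ 1 := by
  have h : |erwS X k ω| ≤ k := by
    unfold erwS
    refine (Finset.abs_sum_le_sum_abs _ _).trans ?_
    have : ∀ i ∈ Finset.Icc 1 k, |X i ω| ≤ 1 := by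
      intro i hi
      rcases hX i (Finset.mem_Icc.1 hi).1 ω with h | h <;> simp [h]
    refine (Finset.sum_le_sum this).trans ?_
    simp
  rw [abs_div, Nat.abs_cast]
  exact div_le_one_of_le₀ h (Nat.cast_nonneg _)

lemma erwS_meas {m0 : MeasurableSpace Ω} {ℱ : Filtration ℕ m0} {X : ℕ → Ω → ℝ}
    (hm : ∀ n, 1 ≤ n → Measurable[ℱ n] (X n)) (k : ℕ) : Measurable[ℱ k] (erwS X k) := by
  unfold erwS
  refine Finset.measurable_fun_sum _ fun i hi => ?_
  exact (hm i (Finset.mem_Icc.1 hi).1).mono (ℱ.mono (Finset.mem_Icc.1 hi).2) le_rfl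

lemma erwM_meas {m0 : MeasurableSpace Ω} {ℱ : Filtration ℕ m0} {X : ℕ → Ω → ℝ}
    (hm : ∀ n, 1 ≤ n → Measurable[ℱ n] (X n)) (a : ℝ) (n : ℕ) :
    Measurable[ℱ n] (erwM X a n) := by
  unfold erwM
  refine Finset.measurable_fun_sum _ fun i hi => ?_
  have hi := Finset.mem_Icc.1 hi
  have h1 : Measurable[ℱ n] (erwS X i) := (erwS_meas hm i).mono (ℱ.mono (by omega)) le_rfl
  have h2 : Measurable[ℱ n] (X (i + 1)) :=
    (hm (i + 1) (by omega)).mono (ℱ.mono (by omega)) le_rfl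
  exact (h1.div_const _).mul (h2.sub ((h1.div_const _).const_mul a))

lemma erwM_bound {X : ℕ → Ω → ℝ} (hX : ∀ n, 1 ≤ n → ∀ ω, X n ω = 1 ∨ X n ω = -1)
    {a : ℝ} (ha : |a| ≤ 1) (n : ℕ) (ω : Ω) : |erwM X a n ω| ≤ 2 * n := by
  unfold erwM
  refine (Finset.abs_sum_le_sum_abs _ _).trans ?_
  have : ∀ i ∈ Finset.Icc 1 (n - 1),
      |(erwS X i ω / i) * (X (i + 1) ω - a * (erwS X i ω / i))| ≤ 2 := by
    intro i hi
    have hY := erw_abs_Y hX i ω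
    have hx : |X (i + 1) ω| ≤ 1 := by
      rcases hX (i + 1) (by omega) ω with h | h <;> simp [h]
    have h2 : |a * (erwS X i ω / i)| ≤ 1 := by
      rw [abs_mul]; exact mul_le_one₀ ha (abs_nonneg _) hY
    have h3 : |X (i + 1) ω - a * (erwS X i ω / i)| ≤ 2 := by
      refine (abs_sub _ _).trans ?_
      linarith
    rw [abs_mul]
    nlinarith [abs_nonneg (erwS X i ω / i), abs_nonneg (X (i + 1) ω - a * (erwS X i ω / i))]
  refine (Finset.sum_le_sum this).trans ?_
  simp only [Finset.sum_const, Nat.card_Icc, nsmul_eq_mul, Nat.add_sub_cancel]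
  have : ((n - 1 : ℕ) : ℝ) ≤ n := by exact_mod_cast Nat.sub_le n 1
  linarith

lemma erwM_succ (X : ℕ → Ω → ℝ) (a : ℝ) (n : ℕ) (hn : 1 ≤ n) (ω : Ω) :
    erwM X a (n + 1) ω = erwM X a n ω +
      (erwS X n ω / n) * (X (n + 1) ω - a * (erwS X n ω / n)) := by
  obtain ⟨k, rfl⟩ : ∃ k, n = k + 1 := ⟨n - 1, by omega⟩
  unfold erwM
  simp only [Nat.add_sub_cancel]
  rw [Finset.sum_Icc_succ_top (by omega)]

lemma exp_erwM_integrable {m0 : MeasurableSpace Ω} (μ : Measure Ω) [IsProbabilityMeasure μ]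
    {ℱ : Filtration ℕ m0} {X : ℕ → Ω → ℝ}
    (hX : ∀ n, 1 ≤ n → ∀ ω, X n ω = 1 ∨ X n ω = -1)
    (hm : ∀ n, 1 ≤ n → Measurable[ℱ n] (X n)) {a : ℝ} (ha : |a| ≤ 1) (t : ℝ) (n : ℕ) :
    Integrable (fun ω => Real.exp (t * erwM X a n ω)) μ := by
  have h0 : Measurable (erwM X a n) := (erwM_meas hm a n).mono (ℱ.le n) le_rfl
  refine Integrable.of_bound (C := Real.exp (|t| * (2 * n)))
    (h0.const_mul t).exp.aestronglyMeasurable (ae_of_all _ fun ω => ?_)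
  rw [Real.norm_eq_abs, Real.abs_exp]
  apply Real.exp_le_exp.2
  refine (le_abs_self _).trans ?_
  rw [abs_mul]
  exact mul_le_mul_of_nonneg_left (erwM_bound hX ha n ω) (abs_nonneg _)

lemma erw_mgf_le {m0 : MeasurableSpace Ω} (μ : Measure Ω) [IsProbabilityMeasure μ]
    {ℱ : Filtration ℕ m0} {X : ℕ → Ω → ℝ}
    (hX : ∀ n, 1 ≤ n → ∀ ω, X n ω = 1 ∨ X n ω = -1)
    (hm : ∀ n, 1 ≤ n → Measurable[ℱ n] (X n)) {a : ℝ} (ha : |a| ≤ 1)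
    (hc : ∀ n, 1 ≤ n → μ[X (n + 1) | ℱ n] =ᵐ[μ] fun ω => a * (erwS X n ω / n))
    (t : ℝ) (n : ℕ) (hn : 1 ≤ n) :
    ∫ ω, Real.exp (t * erwM X a n ω) ∂μ ≤ Real.exp (t ^ 2 / 2 * n) := by
  induction n, hn using Nat.le_induction with
  | base =>
    simp only [erwM, Nat.sub_self]
    simp
    positivity
  | succ n hn ih =>
    set Y : Ω → ℝ := fun ω => erwS X n ω / n with hYdef
    have hY1 : ∀ ω, |Y ω| ≤ 1 := erw_abs_Y hX n
    have hYm : Measurable[ℱ n] Y := (erwS_meas hm n).div_const _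
    have hMm := erwM_meas hm a n
    set W : Ω → ℝ := fun ω => Real.exp (t * erwM X a n ω) * Real.exp (-(t * Y ω * (a * Y ω)))
      with hW
    have hWm : Measurable[ℱ n] W :=
      (hMm.const_mul t).exp.mul (((hYm.const_mul t).mul (hYm.const_mul a)).neg).exp
    set G : Ω → ℝ := fun ω => W ω * Real.sinh (t * Y ω) with hG
    set H : Ω → ℝ := fun ω => W ω * Real.cosh (t * Y ω) with hH
    have hGm : Measurable[ℱ n] G := hWm.mul (Real.measurable_sinh.comp (hYm.const_mul t))
    have hHm : Measurable[ℱ n] H := hWm.mul (Real.measurable_cosh.comp (hYm.const_mul t))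
    have hXm : Measurable (X (n + 1)) := (hm (n + 1) (by omega)).mono (ℱ.le _) le_rfl
    have hXb : ∀ ω, ‖X (n + 1) ω‖ ≤ 1 := fun ω => by
      rcases hX (n + 1) (by omega) ω with h | h <;> simp [h]
    have hXi : Integrable (X (n + 1)) μ :=
      Integrable.of_bound (C := 1) hXm.aestronglyMeasurable (ae_of_all _ hXb)
    have htY : ∀ ω, |t * Y ω| ≤ |t| := fun ω => by
      rw [abs_mul]; exact mul_le_of_le_one_right (abs_nonneg _) (hY1 ω)
    have haY : ∀ ω, |a * Y ω| ≤ 1 := fun ω => by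
      rw [abs_mul]; exact mul_le_one₀ ha (abs_nonneg _) (hY1 ω)
    have hWb : ∀ ω, W ω ≤ Real.exp (|t| * (2 * n) + |t|) := fun ω => by
      simp only [hW]
      rw [← Real.exp_add]
      apply Real.exp_le_exp.2
      refine add_le_add ?_ ?_
      · refine (le_abs_self _).trans ?_
        rw [abs_mul]
        exact mul_le_mul_of_nonneg_left (erwM_bound hX ha n ω) (abs_nonneg _)
      · refine (neg_le_abs _).trans ?_
        rw [abs_mul]
        exact (mul_le_of_le_one_right (abs_nonneg _) (haY ω)).trans (htY ω)
    have hW0 : ∀ ω, 0 ≤ W ω := fun ω => by simp only [hW]; positivity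
    have hcosh : ∀ ω, Real.cosh (t * Y ω) ≤ Real.cosh t := fun ω =>
      Real.cosh_le_cosh.2 (htY ω)
    have hHi : Integrable H μ := by
      refine Integrable.of_bound (C := Real.exp (|t| * (2 * n) + |t|) * Real.cosh t)
        (hHm.mono (ℱ.le n) le_rfl).aestronglyMeasurable (ae_of_all _ fun ω => ?_)
      simp only [hH]
      rw [norm_mul, Real.norm_of_nonneg (hW0 ω), Real.norm_of_nonneg (Real.cosh_pos _).le]
      exact mul_le_mul (hWb ω) (hcosh ω) (Real.cosh_pos _).le (Real.exp_pos _).le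
    have hGi : Integrable G μ := by
      refine hHi.mono (hGm.mono (ℱ.le n) le_rfl).aestronglyMeasurable (ae_of_all _ fun ω => ?_)
      change ‖W ω * Real.sinh (t * Y ω)‖ ≤ ‖W ω * Real.cosh (t * Y ω)‖
      rw [norm_mul (W ω) (Real.sinh _), norm_mul (W ω) (Real.cosh _)]
      refine mul_le_mul_of_nonneg_left ?_ (norm_nonneg (W ω))
      rw [Real.norm_of_nonneg (Real.cosh_pos (t * Y ω)).le, Real.norm_eq_abs]
      refine abs_le_of_sq_le_sq ?_ (Real.cosh_pos _).le
      nlinarith [Real.cosh_sq (t * Y ω)]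
    have hGXi : Integrable (G * X (n + 1)) μ := by
      refine hGi.mul_bdd (c := 1) hXm.aestronglyMeasurable (ae_of_all _ hXb)
    have key : ∫ ω, (G * X (n + 1)) ω ∂μ = ∫ ω, G ω * (a * Y ω) ∂μ := by
      rw [← integral_condExp (ℱ.le n)]
      refine integral_congr_ae ?_
      filter_upwards [condExp_mul_of_stronglyMeasurable_left hGm.stronglyMeasurable hGXi hXi,
        hc n hn] with ω h1 h2
      rw [h1, Pi.mul_apply, h2]
    have hGYi : Integrable (fun ω => G ω * (a * Y ω)) μ := by
      refine hGi.mul_bdd (c := 1)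
        ((hYm.mono (ℱ.le n) le_rfl).const_mul a).aestronglyMeasurable (ae_of_all _ haY)
    have hpt : ∀ ω, Real.exp (t * erwM X a (n + 1) ω) = H ω + (G * X (n + 1)) ω := fun ω => by
      rw [erwM_succ X a n hn ω]
      change Real.exp (t * (erwM X a n ω + Y ω * (X (n + 1) ω - a * Y ω))) = _
      simp only [hH, hG, hW, Pi.mul_apply]
      rw [show t * (erwM X a n ω + Y ω * (X (n + 1) ω - a * Y ω)) =
        t * erwM X a n ω + -(t * Y ω * (a * Y ω)) + t * Y ω * X (n + 1) ω by ring,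
        Real.exp_add, Real.exp_add]
      rcases hX (n + 1) (by omega) ω with h | h
      · rw [h, mul_one, mul_one, ← mul_add, Real.cosh_add_sinh]
      · rw [h, mul_neg_one, mul_neg_one, ← sub_eq_add_neg, ← mul_sub, Real.cosh_sub_sinh]
    simp_rw [hpt]
    rw [integral_add hHi hGXi, key, ← integral_add hHi hGYi]
    calc ∫ ω, (H ω + G ω * (a * Y ω)) ∂μ
        ≤ ∫ ω, Real.exp (t ^ 2 / 2) * Real.exp (t * erwM X a n ω) ∂μ := by
          refine integral_mono (hHi.add hGYi)
            ((exp_erwM_integrable μ hX hm ha t n).const_mul _) fun ω => ?_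
          have h := two_point_hoeffding (a * Y ω) (t * Y ω) (abs_le.1 (haY ω)).1
            (abs_le.1 (haY ω)).2
          have h' : Real.exp ((t * Y ω) ^ 2 / 2) ≤ Real.exp (t ^ 2 / 2) := by
            apply Real.exp_le_exp.2
            have := sq_le_sq.2 (htY ω)
            linarith
          have h3 := mul_le_mul_of_nonneg_left (h.trans h') (Real.exp_pos (t * erwM X a n ω)).le
          simp only [hH, hG, hW]
          linarith
      _ ≤ Real.exp (t ^ 2 / 2) * Real.exp (t ^ 2 / 2 * n) := by
          rw [integral_const_mul]
          exact mul_le_mul_of_nonneg_left ih (Real.exp_pos _).le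
      _ = Real.exp (t ^ 2 / 2 * (n + 1 : ℕ)) := by
          rw [← Real.exp_add]; congr 1; push_cast; ring

/-- Concentration inequality for the martingale `M_n`: for every `p ∈ [0,1]`, `n ≥ 2`
and `x > 0`, `P(|M_n| ≥ x) ≤ 2 exp(-x²/(3n))`. -/
theorem erw_M_concentration
    {m0 : MeasurableSpace Ω} (μ : Measure Ω) [IsProbabilityMeasure μ]
    (ℱ : Filtration ℕ m0) (X : ℕ → Ω → ℝ) (p : ℝ)
    (hERW : IsERW μ ℱ X p) :
    ∀ n, 2 ≤ n → ∀ x : ℝ, 0 < x →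
      (μ {ω | x ≤ |erwM X (2 * p - 1) n ω|}).toReal ≤
        2 * Real.exp (-x ^ 2 / (3 * n)) := by
  obtain ⟨hp0, hp1, hX, hm, hc⟩ := hERW
  intro n hn x hx
  have ha : |2 * p - 1| ≤ 1 := abs_le.2 ⟨by linarith, by linarith⟩
  have hn0 : (0 : ℝ) < n := by exact_mod_cast (by omega : 0 < n)
  set M := erwM X (2 * p - 1) n with hM
  have hi := exp_erwM_integrable μ hX hm ha (n := n)
  have hb := fun t => erw_mgf_le μ hX hm ha hc t n (by omega)
  have hfin : ∀ t : ℝ, t ^ 2 = (x / n) ^ 2 →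
      Real.exp (-(x / n) * x) * Real.exp (t ^ 2 / 2 * n) ≤ Real.exp (-x ^ 2 / (3 * n)) := by
    intro t ht
    rw [ht, ← Real.exp_add]
    apply Real.exp_le_exp.2
    have e : -(x / n) * x + (x / n) ^ 2 / 2 * n = -(x ^ 2 / n) / 2 := by
      field_simp; ring
    have e' : -x ^ 2 / (3 * n) = -(x ^ 2 / n) / 3 := by
      field_simp
    have : 0 ≤ x ^ 2 / n := by positivity
    rw [e, e']
    linarith
  have hu : μ.real {ω | x ≤ M ω} ≤ Real.exp (-x ^ 2 / (3 * n)) := by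
    refine (measure_ge_le_exp_mul_mgf x (t := x / n) (by positivity) (hi _)).trans ?_
    exact (mul_le_mul_of_nonneg_left (hb _) (Real.exp_pos _).le).trans (hfin _ rfl)
  have hl : μ.real {ω | M ω ≤ -x} ≤ Real.exp (-x ^ 2 / (3 * n)) := by
    refine (measure_le_le_exp_mul_mgf (-x) (t := -(x / n)) (by
      have : 0 < x / n := by positivity
      linarith) (hi _)).trans ?_
    rw [show - -(x / n) * -x = -(x / n) * x by ring]
    exact (mul_le_mul_of_nonneg_left (hb _) (Real.exp_pos _).le).trans (hfin _ (by ring))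
  have hsub : {ω | x ≤ |M ω|} ⊆ {ω | x ≤ M ω} ∪ {ω | M ω ≤ -x} := by
    intro ω hω
    rcases le_abs.1 (show x ≤ |M ω| from hω) with h | h
    · exact Or.inl h
    · exact Or.inr (show M ω ≤ -x by linarith)
  change μ.real {ω | x ≤ |M ω|} ≤ _
  have := (measureReal_mono (μ := μ) hsub).trans (measureReal_union_le _ _)
  linarith
end
end

section
/- Test of a given memory value: fix p₀ ∈ (0, 3/4). (i) Under the null hypothesis p = p₀, the law of V_n·(p̂_n − p₀)² converges weakly, as n → ∞, to the chi-square distribution with one degree of freedom (the law of ξ² for ξ a standard Gaussian). (ii) Under the alternative, i.e., if the true memory parameter p ∈ [0,1] satisfies p ≠ p₀, then V_n·(p̂_n − p₀)² → +∞ almost surely as n → ∞. -/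
open MeasureTheory ProbabilityTheory Filter Finset
open scoped BoundedContinuousFunction ENNReal NNReal Topology

noncomputable section

variable {Ω : Type*}

set_option linter.unusedSectionVars false

/-! ### Analytic and deterministic lemmas -/

lemma erw_abel (b d : ℕ → ℝ) (n : ℕ) :
    ∑ k ∈ range n, b k * d k = b n * (∑ k ∈ range n, d k)
      - ∑ k ∈ range n, (∑ j ∈ range (k + 1), d j) * (b (k + 1) - b k) := by
  induction n with
  | zero => simp
  | succ n ih =>
    rw [sum_range_succ, ih, sum_range_succ (fun k => (∑ j ∈ range (k + 1), d j) * _),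
      sum_range_succ d]
    ring

lemma erw_abel_bound (b d : ℕ → ℝ) (hb : Monotone b) (hb0 : 0 ≤ b 0) (C : ℝ)
    (hC : ∀ n, |∑ k ∈ range n, d k| ≤ C) (n : ℕ) :
    |∑ k ∈ range n, b k * d k| ≤ 2 * C * b n := by
  have hC0 : 0 ≤ C := (abs_nonneg _).trans (hC 0)
  have hbn : 0 ≤ b n := hb0.trans (hb (Nat.zero_le n))
  rw [erw_abel]
  have h1 : |b n * ∑ k ∈ range n, d k| ≤ C * b n := by
    rw [abs_mul, abs_of_nonneg hbn, mul_comm]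
    exact mul_le_mul_of_nonneg_right (hC n) hbn
  have h2 : |∑ k ∈ range n, (∑ j ∈ range (k + 1), d j) * (b (k + 1) - b k)| ≤ C * b n := by
    calc _ ≤ ∑ k ∈ range n, |(∑ j ∈ range (k + 1), d j) * (b (k + 1) - b k)| :=
          abs_sum_le_sum_abs _ _
      _ ≤ ∑ k ∈ range n, C * (b (k + 1) - b k) := by
          refine sum_le_sum fun k _ => ?_
          have h0 : 0 ≤ b (k + 1) - b k := sub_nonneg.2 (hb (Nat.le_succ k))
          rw [abs_mul, abs_of_nonneg h0]
          exact mul_le_mul_of_nonneg_right (hC _) h0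
      _ = C * (b n - b 0) := by rw [← mul_sum, sum_range_sub]
      _ ≤ C * b n := by nlinarith
  calc _ ≤ |b n * ∑ k ∈ range n, d k| + _ := abs_sub _ _
    _ ≤ _ := by linarith

lemma erw_kronecker (b d : ℕ → ℝ) (hb : Monotone b) (hbt : Tendsto b atTop atTop) (c : ℝ)
    (hc : Tendsto (fun n => ∑ k ∈ range n, d k) atTop (𝓝 c)) :
    Tendsto (fun n => (∑ k ∈ range n, b k * d k) / b n) atTop (𝓝 0) := by
  have hlit : (fun k => ((∑ j ∈ range (k + 1), d j) - c) * (b (k + 1) - b k)) =o[atTop]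
      (fun k => b (k + 1) - b k) := by
    have h1 : (fun k => (∑ j ∈ range (k + 1), d j) - c) =o[atTop] (fun _ => (1 : ℝ)) := by
      rw [Asymptotics.isLittleO_one_iff]
      have := (hc.comp (tendsto_add_atTop_nat 1)).sub_const c
      simpa using this
    simpa using h1.mul_isBigO (Asymptotics.isBigO_refl (fun k => b (k + 1) - b k) atTop)
  have hsum : Tendsto (fun n => ∑ k ∈ range n, (b (k + 1) - b k)) atTop atTop := by
    simp_rw [sum_range_sub]
    exact tendsto_atTop_add_const_right _ _ hbt
  have h2 := hlit.sum_range (fun k => sub_nonneg.2 (hb (Nat.le_succ k))) hsum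
  simp_rw [sum_range_sub] at h2
  have h3 : (fun n => b n - b 0) =O[atTop] b := by
    have : (fun _ : ℕ => b 0) =O[atTop] b :=
      ((Asymptotics.isLittleO_const_left).2 (Or.inr (tendsto_norm_atTop_atTop.comp hbt))).isBigO
    exact (Asymptotics.isBigO_refl b atTop).sub this
  have h4 := (h2.trans_isBigO h3).tendsto_div_nhds_zero
  have h5 : Tendsto (fun n => c * b 0 / b n) atTop (𝓝 0) := hbt.const_div_atTop _
  have h6 : Tendsto (fun n => ((∑ k ∈ range n, d k) - c)) atTop (𝓝 0) := by
    simpa using hc.sub_const c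
  have h7 := (h6.sub h4).add h5
  simp only [sub_zero, add_zero] at h7
  refine h7.congr' ?_
  filter_upwards [hbt.eventually_gt_atTop 0] with n hn
  rw [erw_abel b d]
  have : ∑ k ∈ range n, ((∑ j ∈ range (k + 1), d j) - c) * (b (k + 1) - b k)
      = ∑ k ∈ range n, (∑ j ∈ range (k + 1), d j) * (b (k + 1) - b k) - c * (b n - b 0) := by
    simp_rw [sub_mul]
    rw [sum_sub_distrib, ← mul_sum, sum_range_sub]
  rw [this]
  field_simp
  ring

/-- The key expansion. -/
lemma erw_expansion (u b : ℝ) (hu : |u| ≤ 1 / 2) (hb : |b| ≤ 1) :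
    ‖(Real.cos u : ℂ) + Complex.I * b * Real.sin u
      - Complex.exp (Complex.I * (u * b)) * Complex.exp (-(u ^ 2 / 2))‖
      ≤ u ^ 2 * b ^ 2 + 5 * |u| ^ 3 := by
  have hu1 : |u| ≤ 1 := by linarith
  have hu0 := abs_nonneg u
  set w : ℂ := Complex.I * (u * b) + -(u ^ 2 / 2) with hw
  have hwn : ‖w‖ ≤ 5 / 4 * |u| := by
    calc ‖w‖ ≤ ‖Complex.I * (u * b)‖ + ‖(-(u ^ 2 / 2) : ℂ)‖ := norm_add_le _ _
      _ = |u| * |b| + |u| ^ 2 / 2 := by simp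
      _ ≤ _ := by nlinarith
  have hw1 : ‖w‖ ≤ 1 := by linarith
  have he := Complex.exp_bound hw1 (n := 3) (by norm_num)
  have hc := Real.cos_bound hu1
  have hs := Real.sin_bound hu1
  rw [← Complex.exp_add, ← hw]
  have he' : ‖Complex.exp w - (1 + w + w ^ 2 / 2)‖ ≤ |u| ^ 3 := by
    have h1 : ∑ m ∈ range 3, w ^ m / (m.factorial : ℂ) = 1 + w + w ^ 2 / 2 := by
      simp [sum_range_succ, Nat.factorial]
    rw [h1] at he
    refine he.trans ?_
    have h3 : ‖w‖ ^ 3 ≤ (5 / 4 * |u|) ^ 3 := by gcongr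
    have : ((Nat.succ 3 : ℕ) : ℝ) * (((Nat.factorial 3 : ℕ) : ℝ) * ((3 : ℕ) : ℝ))⁻¹ = 2 / 9 := by
      norm_num [Nat.factorial]
    rw [this]
    nlinarith [pow_nonneg hu0 3]
  have key : (Real.cos u : ℂ) + Complex.I * b * Real.sin u - Complex.exp w
      = ((Real.cos u - (1 - u ^ 2 / 2) : ℝ) : ℂ)
        + Complex.I * b * ((Real.sin u - (u - u ^ 3 / 6) : ℝ) : ℂ)
        - (Complex.exp w - (1 + w + w ^ 2 / 2))
        + (((u ^ 2 * b ^ 2 / 2 - u ^ 4 / 8 : ℝ) : ℂ)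
          + Complex.I * ((b * u ^ 3 / 3 : ℝ) : ℂ)) := by
    rw [hw]
    push_cast
    ring_nf
    simp only [Complex.I_sq]
    ring
  rw [key]
  have n1 : ‖((Real.cos u - (1 - u ^ 2 / 2) : ℝ) : ℂ)‖ ≤ |u| ^ 3 := by
    rw [Complex.norm_real, Real.norm_eq_abs]
    refine hc.trans ?_
    nlinarith [pow_nonneg hu0 3, pow_nonneg hu0 4]
  have n2 : ‖Complex.I * b * ((Real.sin u - (u - u ^ 3 / 6) : ℝ) : ℂ)‖ ≤ |u| ^ 3 := by
    rw [norm_mul, norm_mul, Complex.norm_I, Complex.norm_real, Complex.norm_real,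
      Real.norm_eq_abs, Real.norm_eq_abs, one_mul]
    have h5 : |u| ^ 5 / 100 ≤ |u| ^ 3 := by
      have : |u| ^ 5 ≤ |u| ^ 3 := pow_le_pow_of_le_one hu0 hu1 (by norm_num)
      nlinarith [pow_nonneg hu0 3]
    calc |b| * _ ≤ 1 * (|u| ^ 5 / 100) := by gcongr
      _ ≤ _ := by linarith
  have n3 : ‖((u ^ 2 * b ^ 2 / 2 - u ^ 4 / 8 : ℝ) : ℂ)‖ ≤ u ^ 2 * b ^ 2 + |u| ^ 3 := by
    rw [Complex.norm_real, Real.norm_eq_abs]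
    have h4 : u ^ 4 ≤ |u| ^ 3 := by
      have : u ^ 4 = |u| ^ 4 := by rw [← abs_pow, abs_of_nonneg (by positivity)]
      rw [this]
      exact pow_le_pow_of_le_one hu0 hu1 (by norm_num)
    have : 0 ≤ u ^ 4 := by positivity
    have : 0 ≤ u ^ 2 * b ^ 2 := by positivity
    rw [abs_le]
    constructor <;> nlinarith [pow_nonneg hu0 3]
  have n4 : ‖Complex.I * ((b * u ^ 3 / 3 : ℝ) : ℂ)‖ ≤ |u| ^ 3 := by
    rw [norm_mul, Complex.norm_I, Complex.norm_real, Real.norm_eq_abs, one_mul, abs_div, abs_mul,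
      abs_pow]
    have : |b| * |u| ^ 3 ≤ 1 * |u| ^ 3 := by gcongr
    rw [abs_of_pos (by norm_num : (0 : ℝ) < 3)]
    linarith [pow_nonneg hu0 3]
  refine (norm_add_le _ _).trans ?_
  refine (add_le_add (norm_sub_le _ _) (norm_add_le _ _)).trans ?_
  refine (add_le_add (add_le_add (norm_add_le _ _) le_rfl) le_rfl).trans ?_
  linarith

def erwL (n : ℕ) : ℝ := ∑ k ∈ range n, 1 / ((k : ℝ) + 2)

lemma erwL_tendsto : Tendsto erwL atTop atTop := by
  have h := (tendsto_add_atTop_iff_nat 1).2 Real.tendsto_sum_range_one_div_nat_succ_atTop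
  have h2 := tendsto_atTop_add_const_right _ (-1 : ℝ) h
  refine h2.congr fun n => ?_
  rw [sum_range_succ', erwL]
  simp only [Nat.cast_add, Nat.cast_one, Nat.cast_zero, zero_add, div_one, add_neg_cancel_right]
  refine sum_congr rfl fun k _ => ?_
  ring

lemma erw_sum_tele (n : ℕ) :
    ∑ k ∈ range n, 1 / (((k : ℝ) + 1) * ((k : ℝ) + 2)) = 1 - 1 / ((n : ℝ) + 1) := by
  induction n with
  | zero => simp
  | succ n ih =>
    rw [sum_range_succ, ih]
    push_cast
    field_simp
    ring

lemma erw_sum_tele_le (n : ℕ) :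
    ∑ k ∈ range n, 1 / (((k : ℝ) + 1) * ((k : ℝ) + 2)) ≤ 1 := by
  rw [erw_sum_tele]
  have : (0 : ℝ) ≤ 1 / ((n : ℝ) + 1) := by positivity
  linarith


/-! ### Reduced model -/

structure ErwRed {m0 : MeasurableSpace Ω} (μ : Measure Ω) (𝒢 : Filtration ℕ m0)
    (y x : ℕ → Ω → ℝ) (a : ℝ) : Prop where
  ha : |a| ≤ 1
  y0 : ∀ ω, y 0 ω ^ 2 = 1
  hx : ∀ k ω, x k ω = 1 ∨ x k ω = -1
  hrec : ∀ k ω, y (k + 1) ω = (((k : ℝ) + 1) * y k ω + x k ω) / ((k : ℝ) + 2)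
  my : ∀ k, Measurable[𝒢 k] (y k)
  mx : ∀ k, Measurable[𝒢 (k + 1)] (x k)
  ce : ∀ k, μ[x k | 𝒢 k] =ᵐ[μ] fun ω => a * y k ω

namespace ErwRed

variable {m0 : MeasurableSpace Ω} {μ : Measure Ω} [IsProbabilityMeasure μ] {𝒢 : Filtration ℕ m0}
  {y x : ℕ → Ω → ℝ} {a : ℝ}

lemma x_sq (h : ErwRed μ 𝒢 y x a) (k : ℕ) (ω : Ω) : x k ω ^ 2 = 1 := by
  rcases h.hx k ω with h | h <;> rw [h] <;> norm_num

lemma abs_x (h : ErwRed μ 𝒢 y x a) (k : ℕ) (ω : Ω) : |x k ω| ≤ 1 := by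
  rcases h.hx k ω with h | h <;> rw [h] <;> norm_num

lemma abs_y (h : ErwRed μ 𝒢 y x a) (k : ℕ) (ω : Ω) : |y k ω| ≤ 1 := by
  induction k with
  | zero => exact (abs_le_one_iff_mul_self_le_one).2 (by nlinarith [h.y0 ω])
  | succ k ih =>
    have hk : (0 : ℝ) ≤ k := Nat.cast_nonneg k
    rw [h.hrec, abs_div, abs_of_pos (by positivity : (0 : ℝ) < (k : ℝ) + 2),
      div_le_one (by positivity)]
    refine (abs_add_le _ _).trans ?_
    rw [abs_mul, abs_of_pos (by positivity : (0 : ℝ) < (k : ℝ) + 1)]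
    nlinarith [h.abs_x k ω]

lemma abs_e (h : ErwRed μ 𝒢 y x a) (k : ℕ) (ω : Ω) : |x k ω - a * y k ω| ≤ 2 := by
  refine (abs_sub _ _).trans ?_
  rw [abs_mul]
  have := mul_le_mul h.ha (h.abs_y k ω) (abs_nonneg _) zero_le_one
  linarith [h.abs_x k ω]

lemma my' (h : ErwRed μ 𝒢 y x a) {k j : ℕ} (hkj : k ≤ j) : Measurable[𝒢 j] (y k) :=
  (h.my k).mono (𝒢.mono hkj) le_rfl

lemma mx' (h : ErwRed μ 𝒢 y x a) {k j : ℕ} (hkj : k + 1 ≤ j) : Measurable[𝒢 j] (x k) :=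
  (h.mx k).mono (𝒢.mono hkj) le_rfl

lemma measy (h : ErwRed μ 𝒢 y x a) (k : ℕ) : Measurable (y k) :=
  (h.my k).mono (𝒢.le _) le_rfl

lemma measx (h : ErwRed μ 𝒢 y x a) (k : ℕ) : Measurable (x k) :=
  (h.mx k).mono (𝒢.le _) le_rfl

lemma intx (h : ErwRed μ 𝒢 y x a) (k : ℕ) : Integrable (x k) μ :=
  Integrable.of_bound (h.measx k).aestronglyMeasurable 1
    (Eventually.of_forall fun ω => h.abs_x k ω)

lemma pull (h : ErwRed μ 𝒢 y x a) (k : ℕ) (G : Ω → ℝ) (hG : Measurable[𝒢 k] G) (C : ℝ)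
    (hC : ∀ ω, |G ω| ≤ C) : ∫ ω, G ω * x k ω ∂μ = ∫ ω, G ω * (a * y k ω) ∂μ := by
  have hGm : Measurable G := hG.mono (𝒢.le _) le_rfl
  have hIntg : Integrable (G * x k) μ := by
    refine Integrable.of_bound (hGm.mul (h.measx k)).aestronglyMeasurable (C * 1)
      (Eventually.of_forall fun ω => ?_)
    rw [Real.norm_eq_abs, Pi.mul_apply, abs_mul]
    exact mul_le_mul (hC ω) (h.abs_x k ω) (abs_nonneg _) ((abs_nonneg _).trans (hC ω))
  have h1 := condExp_mul_of_stronglyMeasurable_left hG.stronglyMeasurable hIntg (h.intx k)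
  calc ∫ ω, G ω * x k ω ∂μ = ∫ ω, (μ[G * x k | 𝒢 k]) ω ∂μ := (integral_condExp (𝒢.le k)).symm
    _ = ∫ ω, G ω * (a * y k ω) ∂μ := by
      refine integral_congr_ae ?_
      filter_upwards [h1, h.ce k] with ω h1 h2
      rw [h1, Pi.mul_apply, h2]

lemma pullC (h : ErwRed μ 𝒢 y x a) (k : ℕ) (G : Ω → ℂ) (hG : Measurable[𝒢 k] G) (C : ℝ)
    (hC : ∀ ω, ‖G ω‖ ≤ C) :
    ∫ ω, G ω * (x k ω : ℂ) ∂μ = ∫ ω, G ω * ((a * y k ω : ℝ) : ℂ) ∂μ := by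
  have hGm : Measurable G := hG.mono (𝒢.le _) le_rfl
  have hi : ∀ (z : Ω → ℝ), Measurable z → (∀ ω, |z ω| ≤ 1) →
      Integrable (fun ω => G ω * (z ω : ℂ)) μ := by
    intro z hz hz1
    refine Integrable.of_bound (hGm.mul (Complex.measurable_ofReal.comp hz)).aestronglyMeasurable
      (C * 1) (Eventually.of_forall fun ω => ?_)
    rw [norm_mul, Complex.norm_real]
    exact mul_le_mul (hC ω) (hz1 ω) (abs_nonneg _) ((norm_nonneg _).trans (hC ω))
  have i1 := hi (x k) (h.measx k) (h.abs_x k)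
  have i2 := hi (fun ω => a * y k ω) ((h.measy k).const_mul a) (fun ω => by
    rw [abs_mul]
    exact mul_le_one₀ h.ha (abs_nonneg _) (h.abs_y k ω))
  have r := h.pull k (fun ω => (G ω).re) (Complex.measurable_re.comp hG) C
    (fun ω => (Complex.abs_re_le_norm _).trans (hC ω))
  have i := h.pull k (fun ω => (G ω).im) (Complex.measurable_im.comp hG) C
    (fun ω => (Complex.abs_im_le_norm _).trans (hC ω))
  rw [← integral_re_add_im i1, ← integral_re_add_im i2]
  simp only [RCLike.re_to_complex, RCLike.im_to_complex, Complex.re_mul_ofReal,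
    Complex.im_mul_ofReal]
  rw [r, i]

lemma int_of_bdd {f : Ω → ℝ} (hf : Measurable f) (C : ℝ) (hC : ∀ ω, |f ω| ≤ C) :
    Integrable f μ :=
  Integrable.of_bound hf.aestronglyMeasurable C (Eventually.of_forall hC)

lemma int_y_pow (h : ErwRed μ 𝒢 y x a) (k j : ℕ) : Integrable (fun ω => y k ω ^ j) μ := by
  refine int_of_bdd ((h.measy k).pow_const j) 1 fun ω => ?_
  rw [abs_pow]
  exact pow_le_one₀ (abs_nonneg _) (h.abs_y k ω)

lemma int_y_pow_x (h : ErwRed μ 𝒢 y x a) (k j : ℕ) :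
    Integrable (fun ω => y k ω ^ j * x k ω) μ := by
  refine int_of_bdd (((h.measy k).pow_const j).mul (h.measx k)) 1 fun ω => ?_
  rw [abs_mul, abs_pow]
  exact mul_le_one₀ (pow_le_one₀ (abs_nonneg _) (h.abs_y k ω)) (abs_nonneg _) (h.abs_x k ω)

lemma pull_pow (h : ErwRed μ 𝒢 y x a) (k j : ℕ) :
    ∫ ω, y k ω ^ j * x k ω ∂μ = a * ∫ ω, y k ω ^ (j + 1) ∂μ := by
  rw [h.pull k (fun ω => y k ω ^ j) ((h.my k).pow_const j) 1
    (fun ω => by rw [abs_pow]; exact pow_le_one₀ (abs_nonneg _) (h.abs_y k ω)),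
    ← integral_const_mul]
  congr 1
  ext ω
  ring

lemma m2_rec (h : ErwRed μ 𝒢 y x a) (k : ℕ) :
    ((k : ℝ) + 2) ^ 2 * ∫ ω, y (k + 1) ω ^ 2 ∂μ
      = (((k : ℝ) + 1) ^ 2 + 2 * a * ((k : ℝ) + 1)) * ∫ ω, y k ω ^ 2 ∂μ + 1 := by
  rw [← integral_const_mul]
  have : ∀ ω, ((k : ℝ) + 2) ^ 2 * y (k + 1) ω ^ 2
      = ((k : ℝ) + 1) ^ 2 * y k ω ^ 2 + 2 * ((k : ℝ) + 1) * (y k ω ^ 1 * x k ω) + 1 := by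
    intro ω
    have h1 := h.x_sq k ω
    have hk : ((k : ℝ) + 2) ≠ 0 := by positivity
    rw [h.hrec]
    field_simp
    linear_combination h1
  simp_rw [this]
  have i1 := (h.int_y_pow k 2).const_mul (((k : ℝ) + 1) ^ 2)
  have i2 := (h.int_y_pow_x k 1).const_mul (2 * ((k : ℝ) + 1))
  rw [integral_add (i1.fun_add i2) (integrable_const _), integral_add i1 i2,
    integral_const_mul, integral_const_mul, h.pull_pow]
  simp
  ring

lemma m4_rec (h : ErwRed μ 𝒢 y x a) (k : ℕ) :
    ((k : ℝ) + 2) ^ 4 * ∫ ω, y (k + 1) ω ^ 4 ∂μ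
      = (((k : ℝ) + 1) ^ 4 + 4 * a * ((k : ℝ) + 1) ^ 3) * ∫ ω, y k ω ^ 4 ∂μ
        + (6 * ((k : ℝ) + 1) ^ 2 + 4 * a * ((k : ℝ) + 1)) * ∫ ω, y k ω ^ 2 ∂μ + 1 := by
  rw [← integral_const_mul]
  have : ∀ ω, ((k : ℝ) + 2) ^ 4 * y (k + 1) ω ^ 4
      = ((k : ℝ) + 1) ^ 4 * y k ω ^ 4 + 4 * ((k : ℝ) + 1) ^ 3 * (y k ω ^ 3 * x k ω)
        + 6 * ((k : ℝ) + 1) ^ 2 * y k ω ^ 2 + 4 * ((k : ℝ) + 1) * (y k ω ^ 1 * x k ω) + 1 := by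
    intro ω
    have hk : ((k : ℝ) + 2) ≠ 0 := by positivity
    rw [h.hrec, div_pow, mul_div_cancel₀ _ (pow_ne_zero _ hk)]
    rcases h.hx k ω with h1 | h1 <;> rw [h1] <;> ring
  simp_rw [this]
  have i1 := (h.int_y_pow k 4).const_mul (((k : ℝ) + 1) ^ 4)
  have i2 := (h.int_y_pow_x k 3).const_mul (4 * ((k : ℝ) + 1) ^ 3)
  have i3 := (h.int_y_pow k 2).const_mul (6 * ((k : ℝ) + 1) ^ 2)
  have i4 := (h.int_y_pow_x k 1).const_mul (4 * ((k : ℝ) + 1))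
  rw [integral_add (((i1.fun_add i2).fun_add i3).fun_add i4) (integrable_const _),
    integral_add ((i1.fun_add i2).fun_add i3) i4, integral_add (i1.fun_add i2) i3, integral_add i1 i2,
    integral_const_mul, integral_const_mul, integral_const_mul, integral_const_mul,
    h.pull_pow, h.pull_pow]
  simp
  ring

/-- Moment bounds in the diffusive regime. -/
lemma moments (h : ErwRed μ 𝒢 y x a) (ha : a < 1 / 2) :
    ∃ C : ℝ, 1 ≤ C ∧ (∀ k : ℕ, ∫ ω, y k ω ^ 2 ∂μ ≤ C / ((k : ℝ) + 1)) ∧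
      (∀ k : ℕ, ∫ ω, y k ω ^ 4 ∂μ ≤ C / ((k : ℝ) + 1) ^ 2) := by
  set a' := max a 0 with ha'
  have ha0 : 0 ≤ a' := le_max_right _ _
  have haa : a ≤ a' := le_max_left _ _
  have ha1 : 0 < 1 - 2 * a' := by
    have : a' < 1 / 2 := max_lt ha (by norm_num)
    linarith
  set c := 1 / (1 - 2 * a') with hc
  have hc1 : 1 ≤ c := by rw [hc, le_div_iff₀ ha1]; linarith
  have hcc : c * (1 - 2 * a') = 1 := by rw [hc]; field_simp
  have hm2 : ∀ k : ℕ, ((k : ℝ) + 1) ^ 2 * ∫ ω, y k ω ^ 2 ∂μ ≤ c * ((k : ℝ) + 1) := by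
    intro k
    induction k with
    | zero => simpa [h.y0] using hc1
    | succ k ih =>
      have hk : (0 : ℝ) ≤ k := Nat.cast_nonneg k
      have hr := h.m2_rec k
      have hm : 0 ≤ ∫ ω, y k ω ^ 2 ∂μ := integral_nonneg fun ω => by positivity
      set m := ∫ ω, y k ω ^ 2 ∂μ
      have hm' : ((k : ℝ) + 1) * m ≤ c := by nlinarith
      have e1 : 2 * a * (((k : ℝ) + 1) * m) ≤ 2 * a' * c := by
        have : a * (((k : ℝ) + 1) * m) ≤ a' * (((k : ℝ) + 1) * m) := by gcongr
        have : a' * (((k : ℝ) + 1) * m) ≤ a' * c := by gcongr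
        linarith
      push_cast
      have : ((k : ℝ) + 1 + 1) = (k : ℝ) + 2 := by ring
      rw [this, hr]
      nlinarith
  have hm2' : ∀ k : ℕ, ∫ ω, y k ω ^ 2 ∂μ ≤ c / ((k : ℝ) + 1) := by
    intro k
    have hk : (0 : ℝ) < (k : ℝ) + 1 := by positivity
    rw [le_div_iff₀ hk]
    nlinarith [hm2 k]
  set D := 11 * c * c / 2 with hD
  have hD1 : c ≤ D := by rw [hD]; nlinarith
  have hDD : D * (2 - 4 * a') = 11 * c := by
    rw [hD]; linear_combination (11 * c) * hcc
  have hm4 : ∀ k : ℕ, ((k : ℝ) + 1) ^ 4 * ∫ ω, y k ω ^ 4 ∂μ ≤ D * ((k : ℝ) + 1) ^ 2 := by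
    intro k
    induction k with
    | zero =>
      have : ∀ ω, y 0 ω ^ 4 = 1 := fun ω => by
        rw [show y 0 ω ^ 4 = (y 0 ω ^ 2) ^ 2 by ring, h.y0]; norm_num
      simp [this]
      linarith
    | succ k ih =>
      have hk : (0 : ℝ) ≤ k := Nat.cast_nonneg k
      have hr := h.m4_rec k
      have hmn : 0 ≤ ∫ ω, y k ω ^ 2 ∂μ := integral_nonneg fun ω => by positivity
      have hqn : 0 ≤ ∫ ω, y k ω ^ 4 ∂μ := integral_nonneg fun ω => by positivity
      have hm := hm2 k
      set m := ∫ ω, y k ω ^ 2 ∂μ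
      set q := ∫ ω, y k ω ^ 4 ∂μ
      set K := (k : ℝ) + 1 with hK
      have hK1 : 1 ≤ K := by linarith
      have hq' : K ^ 3 * q ≤ D * K := by
        have : K * (K ^ 3 * q) ≤ K * (D * K) := by nlinarith
        exact le_of_mul_le_mul_left this (by linarith)
      have e1 : a * (K ^ 3 * q) ≤ a' * (D * K) := by
        have h1 : a * (K ^ 3 * q) ≤ a' * (K ^ 3 * q) := by gcongr
        have h2 : a' * (K ^ 3 * q) ≤ a' * (D * K) := by gcongr
        linarith
      have e2 : a * (K * m) ≤ K ^ 2 * m := by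
        have h1 : a * (K * m) ≤ 1 * (K * m) := by gcongr; linarith
        have h2 : K * m ≤ K * (K * m) := le_mul_of_one_le_left (by positivity) hK1
        nlinarith
      have h2 : (k : ℝ) + 2 = K + 1 := by rw [hK]; ring
      have h3 : ((k + 1 : ℕ) : ℝ) + 1 = K + 1 := by push_cast; rw [hK]
      rw [h2] at hr
      rw [h3, hr]
      have e3 : (K ^ 4 + 4 * a * K ^ 3) * q + (6 * K ^ 2 + 4 * a * K) * m + 1
        ≤ D * K ^ 2 + 4 * (a' * (D * K)) + 10 * (c * K) + 1 := by nlinarith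
      have e4 : 4 * (a' * (D * K)) = 2 * D * K - 11 * c * K := by
        linear_combination (-K) * hDD
      nlinarith
  refine ⟨D, hc1.trans hD1, fun k => (hm2' k).trans ?_, fun k => ?_⟩
  · gcongr
  · have hk : (0 : ℝ) < (k : ℝ) + 1 := by positivity
    rw [le_div_iff₀ (by positivity)]
    have := hm4 k
    have h2 : ((k : ℝ) + 1) ^ 2 * (((k : ℝ) + 1) ^ 2 * ∫ ω, y k ω ^ 4 ∂μ)
      ≤ ((k : ℝ) + 1) ^ 2 * D := by nlinarith
    have := le_of_mul_le_mul_left h2 (by positivity)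
    linarith


/-! ### Martingale transforms -/

def MT (ξ y x : ℕ → Ω → ℝ) (a : ℝ) (n : ℕ) (ω : Ω) : ℝ :=
  ∑ k ∈ range n, ξ k ω * (x k ω - a * y k ω)

def AA (y : ℕ → Ω → ℝ) (n : ℕ) (ω : Ω) : ℝ := ∑ k ∈ range n, y k ω ^ 2

lemma MT_succ (ξ y x : ℕ → Ω → ℝ) (a : ℝ) (n : ℕ) (ω : Ω) :
    MT ξ y x a (n + 1) ω = MT ξ y x a n ω + ξ n ω * (x n ω - a * y n ω) := by
  simp [MT, sum_range_succ]

lemma AA_succ (y : ℕ → Ω → ℝ) (n : ℕ) (ω : Ω) : AA y (n + 1) ω = AA y n ω + y n ω ^ 2 := by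
  simp [AA, sum_range_succ]

lemma AA_mono (y : ℕ → Ω → ℝ) (ω : Ω) : Monotone fun n => AA y n ω :=
  monotone_nat_of_le_succ fun n => by rw [AA_succ]; nlinarith [sq_nonneg (y n ω)]

lemma AA_one (h : ErwRed μ 𝒢 y x a) (ω : Ω) : AA y 1 ω = 1 := by
  simp [AA, h.y0]

lemma AA_ge (h : ErwRed μ 𝒢 y x a) (n : ℕ) (ω : Ω) : 1 ≤ AA y (n + 1) ω := by
  rw [← h.AA_one ω]
  exact AA_mono y ω (by omega)

lemma AA_nonneg (y : ℕ → Ω → ℝ) (n : ℕ) (ω : Ω) : 0 ≤ AA y n ω :=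
  sum_nonneg fun _ _ => sq_nonneg _

lemma AA_meas (h : ErwRed μ 𝒢 y x a) {n j : ℕ} (hj : n ≤ j + 1) : Measurable[𝒢 j] (AA y n) := by
  refine Finset.measurable_fun_sum _ fun k hk => ?_
  refine (h.my' ?_).pow_const 2
  have := mem_range.1 hk
  omega

lemma AA_le (h : ErwRed μ 𝒢 y x a) (n : ℕ) (ω : Ω) : AA y n ω ≤ n := by
  calc AA y n ω ≤ ∑ k ∈ range n, (1 : ℝ) :=
        sum_le_sum fun k _ => (sq_le_one_iff_abs_le_one _).2 (h.abs_y k ω)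
    _ = n := by simp

section
variable {ξ : ℕ → Ω → ℝ}

lemma MT_meas (h : ErwRed μ 𝒢 y x a) (hξ : ∀ k, Measurable[𝒢 k] (ξ k)) (n : ℕ) :
    Measurable[𝒢 n] (MT ξ y x a n) := by
  refine Finset.measurable_fun_sum _ fun k hk => ?_
  have hk := mem_range.1 hk
  exact ((hξ k).mono (𝒢.mono hk.le) le_rfl).mul ((h.mx' hk).sub ((h.my' hk.le).const_mul a))

lemma MT_abs (h : ErwRed μ 𝒢 y x a) (hb : ∀ k ω, |ξ k ω| ≤ 1) (n : ℕ) (ω : Ω) :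
    |MT ξ y x a n ω| ≤ 2 * n := by
  calc _ ≤ ∑ k ∈ range n, |ξ k ω * (x k ω - a * y k ω)| := abs_sum_le_sum_abs _ _
    _ ≤ ∑ k ∈ range n, (2 : ℝ) := by
      refine sum_le_sum fun k _ => ?_
      rw [abs_mul]
      have := mul_le_mul (hb k ω) (h.abs_e k ω) (abs_nonneg _) zero_le_one
      linarith
    _ = 2 * n := by simp [mul_comm]

lemma MT_int (h : ErwRed μ 𝒢 y x a) (hξ : ∀ k, Measurable[𝒢 k] (ξ k))
    (hb : ∀ k ω, |ξ k ω| ≤ 1) (n : ℕ) : Integrable (MT ξ y x a n) μ :=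
  int_of_bdd ((h.MT_meas hξ n).mono (𝒢.le n) le_rfl) _ (h.MT_abs hb n)

lemma pull_e (h : ErwRed μ 𝒢 y x a) (k : ℕ) (G : Ω → ℝ) (hG : Measurable[𝒢 k] G) (C : ℝ)
    (hC : ∀ ω, |G ω| ≤ C) : ∫ ω, G ω * (x k ω - a * y k ω) ∂μ = 0 := by
  have hGm : Measurable G := hG.mono (𝒢.le _) le_rfl
  simp_rw [mul_sub]
  rw [integral_sub, h.pull k G hG C hC, sub_self]
  · refine int_of_bdd (hGm.mul (h.measx k)) (C * 1) fun ω => ?_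
    rw [abs_mul]
    exact mul_le_mul (hC ω) (h.abs_x k ω) (abs_nonneg _) ((abs_nonneg _).trans (hC ω))
  · refine int_of_bdd (hGm.mul ((h.measy k).const_mul a)) (C * 1) fun ω => ?_
    rw [abs_mul]
    refine mul_le_mul (hC ω) ?_ (abs_nonneg _) ((abs_nonneg _).trans (hC ω))
    rw [abs_mul]
    exact mul_le_one₀ h.ha (abs_nonneg _) (h.abs_y k ω)

lemma MT_sq (h : ErwRed μ 𝒢 y x a) (hξ : ∀ k, Measurable[𝒢 k] (ξ k))
    (hb : ∀ k ω, |ξ k ω| ≤ 1) (n : ℕ) :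
    Integrable (fun ω => MT ξ y x a n ω ^ 2) μ ∧
    ∫ ω, MT ξ y x a n ω ^ 2 ∂μ ≤ 4 * ∑ k ∈ range n, ∫ ω, ξ k ω ^ 2 ∂μ := by
  have hIntg : ∀ n, Integrable (fun ω => MT ξ y x a n ω ^ 2) μ := by
    intro n
    refine int_of_bdd (((h.MT_meas hξ n).mono (𝒢.le n) le_rfl).pow_const 2) ((2 * n) ^ 2)
      fun ω => ?_
    rw [abs_pow]
    exact pow_le_pow_left₀ (abs_nonneg _) (h.MT_abs hb n ω) 2
  refine ⟨hIntg n, ?_⟩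
  induction n with
  | zero => simp [MT]
  | succ n ih =>
    have hξm : ∀ k, Measurable (ξ k) := fun k => (hξ k).mono (𝒢.le k) le_rfl
    have hem : Measurable fun ω => x n ω - a * y n ω := (h.measx n).sub ((h.measy n).const_mul a)
    have e0 : ∀ ω, |MT ξ y x a n ω * ξ n ω| ≤ 2 * n := fun ω => by
      rw [abs_mul]
      have := mul_le_mul (h.MT_abs hb n ω) (hb n ω) (abs_nonneg _) (by positivity)
      linarith
    have c0 := h.pull_e n (fun ω => MT ξ y x a n ω * ξ n ω) ((h.MT_meas hξ n).mul (hξ n)) _ e0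
    have iξ : Integrable (fun ω => 4 * ξ n ω ^ 2) μ := by
      refine int_of_bdd (((hξm n).pow_const 2).const_mul 4) 4 fun ω => ?_
      rw [abs_mul, abs_pow, abs_of_pos (by norm_num : (0 : ℝ) < 4)]
      nlinarith [pow_le_one₀ (n := 2) (abs_nonneg _) (hb n ω)]
    have ic : Integrable (fun ω => 2 * (MT ξ y x a n ω * ξ n ω * (x n ω - a * y n ω))) μ := by
      refine Integrable.const_mul ?_ 2
      refine int_of_bdd ((((h.MT_meas hξ n).mono (𝒢.le n) le_rfl).mul (hξm n)).mul hem)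
        (2 * n * 2) fun ω => ?_
      rw [abs_mul]
      exact mul_le_mul (e0 ω) (h.abs_e n ω) (abs_nonneg _) (by positivity)
    have step : ∫ ω, MT ξ y x a (n + 1) ω ^ 2 ∂μ ≤ ∫ ω, (MT ξ y x a n ω ^ 2 +
        2 * (MT ξ y x a n ω * ξ n ω * (x n ω - a * y n ω)) + 4 * ξ n ω ^ 2) ∂μ := by
      refine integral_mono (hIntg _) (((hIntg n).fun_add ic).fun_add iξ) fun ω => ?_
      simp only [MT_succ]
      have : (x n ω - a * y n ω) ^ 2 ≤ 4 := by
        have := pow_le_pow_left₀ (abs_nonneg _) (h.abs_e n ω) 2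
        rw [sq_abs] at this
        linarith
      nlinarith [mul_le_mul_of_nonneg_left this (sq_nonneg (ξ n ω))]
    rw [integral_add ((hIntg n).fun_add ic) iξ, integral_add (hIntg n) ic, integral_const_mul,
      integral_const_mul, c0] at step
    rw [sum_range_succ]
    linarith

lemma MT_martingale (h : ErwRed μ 𝒢 y x a) (hξ : ∀ k, Measurable[𝒢 k] (ξ k))
    (hb : ∀ k ω, |ξ k ω| ≤ 1) : Martingale (MT ξ y x a) 𝒢 μ := by
  refine martingale_of_setIntegral_eq_succ (fun n => (h.MT_meas hξ n).stronglyMeasurable)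
    (h.MT_int hξ hb) fun n s hs => ?_
  have hs' : MeasurableSet s := 𝒢.le n s hs
  have hd : Integrable (fun ω => ξ n ω * (x n ω - a * y n ω)) μ := by
    have := (h.MT_int hξ hb (n + 1)).sub (h.MT_int hξ hb n)
    refine this.congr (Eventually.of_forall fun ω => ?_)
    simp [MT_succ]
  simp_rw [MT_succ]
  rw [integral_add (h.MT_int hξ hb n).integrableOn hd.integrableOn]
  have : ∫ ω in s, ξ n ω * (x n ω - a * y n ω) ∂μ = 0 := by
    rw [← integral_indicator hs']
    have := h.pull_e n (s.indicator (ξ n)) ((hξ n).indicator hs) 1 (fun ω => by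
      by_cases hω : ω ∈ s
      · rw [Set.indicator_of_mem hω]; exact hb n ω
      · rw [Set.indicator_of_notMem hω]; simp)
    rw [← this]
    congr 1
    ext ω
    by_cases hω : ω ∈ s <;> simp [hω]
  rw [this, add_zero]

lemma MT_conv (h : ErwRed μ 𝒢 y x a) (hξ : ∀ k, Measurable[𝒢 k] (ξ k))
    (hb : ∀ k ω, |ξ k ω| ≤ 1) (K : ℝ) (hK : ∀ n, ∑ k ∈ range n, ∫ ω, ξ k ω ^ 2 ∂μ ≤ K) :
    ∀ᵐ ω ∂μ, ∃ c, Tendsto (fun n => MT ξ y x a n ω) atTop (𝓝 c) := by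
  refine (h.MT_martingale hξ hb).submartingale.exists_ae_tendsto_of_bdd
    (R := (1 + 4 * K).toNNReal) fun n => ?_
  rw [eLpNorm_one_eq_lintegral_enorm, ← ofReal_integral_norm_eq_lintegral_enorm (h.MT_int hξ hb n)]
  refine ENNReal.ofReal_le_ofReal ?_
  obtain ⟨i, b⟩ := h.MT_sq hξ hb n
  calc ∫ ω, ‖MT ξ y x a n ω‖ ∂μ ≤ ∫ ω, (1 + MT ξ y x a n ω ^ 2) ∂μ := by
        refine integral_mono (h.MT_int hξ hb n).norm ((integrable_const _).fun_add i) fun ω => ?_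
        simp only [Real.norm_eq_abs]
        nlinarith [sq_abs (MT ξ y x a n ω), sq_nonneg (|MT ξ y x a n ω| - 1)]
    _ = 1 + ∫ ω, MT ξ y x a n ω ^ 2 ∂μ := by
        rw [integral_add (integrable_const _) i]; simp
    _ ≤ 1 + 4 * K := by linarith [hK n]

end

lemma sum_div_le (h : ErwRed μ 𝒢 y x a) (n : ℕ) (ω : Ω) :
    ∑ k ∈ range (n + 1), (y k ω / AA y (k + 1) ω) ^ 2 ≤ 2 - 1 / AA y (n + 1) ω := by
  induction n with
  | zero => simp [h.AA_one, h.y0]; norm_num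
  | succ n ih =>
    rw [sum_range_succ]
    have h1 := h.AA_ge n ω
    have h2 : AA y (n + 1) ω ≤ AA y (n + 1 + 1) ω := AA_mono y ω (by omega)
    have h3 := AA_succ y (n + 1) ω
    have : (y (n + 1) ω / AA y (n + 1 + 1) ω) ^ 2
        ≤ 1 / AA y (n + 1) ω - 1 / AA y (n + 1 + 1) ω := by
      rw [div_pow, show y (n + 1) ω ^ 2 = AA y (n + 1 + 1) ω - AA y (n + 1) ω by linarith]
      set A := AA y (n + 1) ω
      set B := AA y (n + 1 + 1) ω
      have hA : 0 < A := by linarith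
      have hB : 0 < B := by linarith
      rw [div_sub_div _ _ hA.ne' hB.ne', div_le_div_iff₀ (by positivity) (by positivity)]
      nlinarith [mul_nonneg (sub_nonneg.2 h2) (mul_nonneg (by linarith : 0 ≤ B)
        (sub_nonneg.2 h2))]
    linarith

lemma ident (h : ErwRed μ 𝒢 y x a) (n : ℕ) (ω : Ω) :
    ((n : ℝ) + 1) * y n ω ^ 2 - 1 =
      (2 * a - 1) * (∑ k ∈ range n, ((k : ℝ) + 1) / ((k : ℝ) + 2) * y k ω ^ 2)
      + 2 * MT (fun k ω => ((k : ℝ) + 1) / ((k : ℝ) + 2) * y k ω) y x a n ω + erwL n := by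
  induction n with
  | zero => simp [h.y0, MT, erwL]
  | succ n ih =>
    rw [sum_range_succ, MT_succ, erwL, sum_range_succ, ← erwL]
    have h1 := h.x_sq n ω
    have : ((n + 1 : ℕ) : ℝ) + 1 = (n : ℝ) + 2 := by push_cast; ring
    rw [this]
    have e : ((n : ℝ) + 2) * y (n + 1) ω ^ 2 = ((n : ℝ) + 1) * y n ω ^ 2 +
      (((n : ℝ) + 1) / ((n : ℝ) + 2) * ((2 * a - 1) * y n ω ^ 2 +
        2 * (y n ω * (x n ω - a * y n ω))) + 1 / ((n : ℝ) + 2)) := by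
      rw [h.hrec]
      field_simp
      linear_combination h1
    linear_combination e + ih

/-- Almost surely `A_n → ∞` and the normalized martingale tends to zero. -/
lemma ae_main (h : ErwRed μ 𝒢 y x a) : ∀ᵐ ω ∂μ,
    Tendsto (fun n => AA y n ω) atTop atTop ∧
    Tendsto (fun n => MT y y x a n ω / AA y (n + 1) ω) atTop (𝓝 0) := by
  set ξ : ℕ → Ω → ℝ := fun k ω => y k ω / AA y (k + 1) ω with hξd
  have hξ : ∀ k, Measurable[𝒢 k] (ξ k) := fun k => (h.my k).div (h.AA_meas le_rfl)
  have hb : ∀ k ω, |ξ k ω| ≤ 1 := by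
    intro k ω
    have h1 := h.AA_ge k ω
    simp only [hξd]
    rw [abs_div, abs_of_pos (by positivity : 0 < AA y (k + 1) ω), div_le_one (by positivity)]
    exact (h.abs_y k ω).trans h1
  have hK : ∀ n, ∑ k ∈ range n, ∫ ω, ξ k ω ^ 2 ∂μ ≤ 2 := by
    intro n
    have hi : ∀ k, Integrable (fun ω => ξ k ω ^ 2) μ := fun k => by
      refine int_of_bdd (((hξ k).mono (𝒢.le k) le_rfl).pow_const 2) 1 fun ω => ?_
      rw [abs_pow]
      exact pow_le_one₀ (abs_nonneg _) (hb k ω)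
    rw [← integral_finsetSum _ (fun k _ => hi k)]
    have : ∫ ω, ∑ k ∈ range n, ξ k ω ^ 2 ∂μ ≤ ∫ _ω, (2 : ℝ) ∂μ := by
      refine integral_mono (integrable_finsetSum _ fun k _ => hi k) (integrable_const _)
        fun ω => ?_
      calc ∑ k ∈ range n, ξ k ω ^ 2 ≤ ∑ k ∈ range (n + 1), ξ k ω ^ 2 :=
            sum_le_sum_of_subset_of_nonneg (range_mono (Nat.le_succ n))
              (fun _ _ _ => sq_nonneg _)
        _ ≤ 2 - 1 / AA y (n + 1) ω := h.sum_div_le n ω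
        _ ≤ 2 := by
          have : 0 ≤ 1 / AA y (n + 1) ω := by have := h.AA_ge n ω; positivity
          linarith
    simpa using this
  filter_upwards [h.MT_conv hξ hb 2 hK] with ω ⟨c, hc⟩
  have hAne : ∀ k, AA y (k + 1) ω ≠ 0 := fun k => by have := h.AA_ge k ω; positivity
  set d : ℕ → ℝ := fun k => ξ k ω * (x k ω - a * y k ω) with hd
  have hdc : Tendsto (fun n => ∑ k ∈ range n, d k) atTop (𝓝 c) := hc
  obtain ⟨C, hC⟩ : ∃ C, ∀ n, |∑ k ∈ range n, d k| ≤ C := by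
    obtain ⟨C, hC⟩ := (Metric.isBounded_range_of_tendsto _ hdc).exists_norm_le
    exact ⟨C, fun n => hC _ ⟨n, rfl⟩⟩
  have hAt : Tendsto (fun n => AA y n ω) atTop atTop := by
    rcases tendsto_atTop_of_monotone (AA_mono y ω) with hT | ⟨l, hl⟩
    · exact hT
    exfalso
    have hAl : ∀ n, AA y n ω ≤ l := fun n => (AA_mono y ω).ge_of_tendsto hl n
    have hC0 : 0 ≤ C := (abs_nonneg _).trans (hC 0)
    set w : ℕ → ℝ := fun k => ((k : ℝ) + 1) / ((k : ℝ) + 2) with hw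
    have hw1 : ∀ k, w k = 1 - 1 / ((k : ℝ) + 2) := fun k => by
      simp only [hw]; field_simp; ring
    have hwm : Monotone w := by
      intro i j hij
      rw [hw1, hw1]
      gcongr
    have hw0 : ∀ k, 0 ≤ w k := fun k => by simp only [hw]; positivity
    have hwl : ∀ k, w k ≤ 1 := fun k => by
      rw [hw1]
      have : (0 : ℝ) ≤ 1 / ((k : ℝ) + 2) := by positivity
      linarith
    have hN : ∀ n, |MT (fun k ω => ((k : ℝ) + 1) / ((k : ℝ) + 2) * y k ω) y x a n ω|
        ≤ 2 * C * l := by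
      intro n
      have hm : Monotone fun k => w k * AA y (k + 1) ω := fun i j hij =>
        mul_le_mul (hwm hij) (AA_mono y ω (by omega)) (AA_nonneg _ _ _) (hw0 _)
      have hB := erw_abel_bound (fun k => w k * AA y (k + 1) ω) d hm
        (mul_nonneg (hw0 _) (AA_nonneg _ _ _)) C hC n
      have heq : ∑ k ∈ range n, w k * AA y (k + 1) ω * d k
          = MT (fun k ω => ((k : ℝ) + 1) / ((k : ℝ) + 2) * y k ω) y x a n ω := by
        refine sum_congr rfl fun k _ => ?_
        have := hAne k
        simp only [hd, hξd, hw]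
        field_simp
      rw [heq] at hB
      refine hB.trans ?_
      have : w n * AA y (n + 1) ω ≤ 1 * l :=
        mul_le_mul (hwl n) (hAl _) (AA_nonneg _ _ _) zero_le_one
      have := mul_le_mul_of_nonneg_left this (by positivity : 0 ≤ 2 * C)
      linarith
    have hA' : ∀ n, |(2 * a - 1) * ∑ k ∈ range n, ((k : ℝ) + 1) / ((k : ℝ) + 2) * y k ω ^ 2|
        ≤ 3 * l := by
      intro n
      have h0 : 0 ≤ ∑ k ∈ range n, ((k : ℝ) + 1) / ((k : ℝ) + 2) * y k ω ^ 2 :=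
        sum_nonneg fun k _ => mul_nonneg (hw0 k) (sq_nonneg _)
      have h1 : ∑ k ∈ range n, ((k : ℝ) + 1) / ((k : ℝ) + 2) * y k ω ^ 2 ≤ AA y n ω :=
        sum_le_sum fun k _ => mul_le_of_le_one_left (sq_nonneg _) (hwl k)
      rw [abs_mul, abs_of_nonneg h0]
      refine mul_le_mul ?_ (h1.trans (hAl n)) h0 (by norm_num)
      have := abs_le.1 h.ha
      rw [abs_le]
      constructor <;> linarith
    have hev : ∀ᶠ n : ℕ in atTop, 1 / ((n : ℝ) + 1) ≤ y n ω ^ 2 := by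
      filter_upwards [erwL_tendsto.eventually_ge_atTop (3 * l + 2 * (2 * C * l))] with n hn
      have hi := h.ident n ω
      have h1 := (abs_le.1 (hN n)).1
      have h2 := (abs_le.1 (hA' n)).1
      rw [div_le_iff₀ (by positivity)]
      nlinarith
    have hsum : Summable fun n => y n ω ^ 2 := by
      refine summable_of_sum_range_le (c := l) (fun n => sq_nonneg _) fun n => hAl n
    have hs2 : Summable fun n : ℕ => 1 / ((n : ℝ) + 1) := by
      refine Summable.of_norm_bounded_eventually_nat hsum ?_
      filter_upwards [hev] with n hn
      rw [Real.norm_of_nonneg (by positivity)]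
      exact hn
    have hs3 : Summable fun n : ℕ => (fun m : ℕ => 1 / (m : ℝ)) (n + 1) := by
      simpa using hs2
    exact Real.not_summable_one_div_natCast ((summable_nat_add_iff 1).1 hs3)
  refine ⟨hAt, ?_⟩
  have := erw_kronecker (fun k => AA y (k + 1) ω) d
    (fun i j hij => AA_mono y ω (by omega)) (hAt.comp (tendsto_add_atTop_nat 1)) c hdc
  refine this.congr fun n => ?_
  congr 1
  refine sum_congr rfl fun k _ => ?_
  have := hAne k
  simp only [hd, hξd]
  field_simp


/-! ### `L¹` law of large numbers for `A_n` -/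

lemma sum_m2 {C : ℝ} (hC : 1 ≤ C)
    (h2 : ∀ k : ℕ, ∫ ω, y k ω ^ 2 ∂μ ≤ C / ((k : ℝ) + 1)) (n : ℕ) :
    ∑ k ∈ range n, ∫ ω, y k ω ^ 2 ∂μ ≤ 2 * C * erwL n := by
  rw [erwL, mul_sum]
  refine sum_le_sum fun k _ => (h2 k).trans ?_
  have hk : (0 : ℝ) ≤ k := Nat.cast_nonneg k
  rw [mul_one_div, div_le_div_iff₀ (by positivity) (by positivity)]
  nlinarith

lemma sum_m4 {C : ℝ} (hC : 1 ≤ C)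
    (h4 : ∀ k : ℕ, ∫ ω, y k ω ^ 4 ∂μ ≤ C / ((k : ℝ) + 1) ^ 2) (n : ℕ) :
    ∑ k ∈ range n, ∫ ω, y k ω ^ 4 ∂μ ≤ 2 * C := by
  calc _ ≤ ∑ k ∈ range n, 2 * C * (1 / (((k : ℝ) + 1) * ((k : ℝ) + 2))) := by
        refine sum_le_sum fun k _ => (h4 k).trans ?_
        have hk : (0 : ℝ) ≤ k := Nat.cast_nonneg k
        rw [mul_one_div, div_le_div_iff₀ (by positivity) (by positivity)]
        have : ((k : ℝ) + 1) * ((k : ℝ) + 2) ≤ 2 * ((k : ℝ) + 1) ^ 2 := by nlinarith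
        nlinarith
    _ = 2 * C * _ := (mul_sum _ _ _).symm
    _ ≤ 2 * C * 1 := by gcongr; exact erw_sum_tele_le n
    _ = 2 * C := by ring

lemma L1_bound (h : ErwRed μ 𝒢 y x a) {C : ℝ} (hC : 1 ≤ C)
    (h2 : ∀ k : ℕ, ∫ ω, y k ω ^ 2 ∂μ ≤ C / ((k : ℝ) + 1)) (n : ℕ) (hL : 0 < erwL n) :
    ∫ ω, |(1 - 2 * a) * AA y n ω - erwL n| ∂μ ≤ (1 + 8 * C) * (1 + √(erwL n)) := by
  set ξ : ℕ → Ω → ℝ := fun k ω => ((k : ℝ) + 1) / ((k : ℝ) + 2) * y k ω with hξd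
  have hw1 : ∀ k : ℕ, ((k : ℝ) + 1) / ((k : ℝ) + 2) ≤ 1 := fun k => by
    rw [div_le_one (by positivity)]; linarith
  have hw0 : ∀ k : ℕ, 0 ≤ ((k : ℝ) + 1) / ((k : ℝ) + 2) := fun k => by positivity
  have hξ : ∀ k, Measurable[𝒢 k] (ξ k) := fun k => (h.my k).const_mul _
  have hb' : ∀ k ω, |ξ k ω| ≤ |y k ω| := fun k ω => by
    simp only [hξd]
    rw [abs_mul, abs_of_nonneg (hw0 k)]
    exact mul_le_of_le_one_left (abs_nonneg _) (hw1 k)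
  have hb : ∀ k ω, |ξ k ω| ≤ 1 := fun k ω => (hb' k ω).trans (h.abs_y k ω)
  obtain ⟨iN, bN⟩ := h.MT_sq hξ hb n
  set s := √(erwL n) with hs
  have hs0 : 0 < s := Real.sqrt_pos.2 hL
  have hss : s * s = erwL n := Real.mul_self_sqrt hL.le
  have bN2 : ∫ ω, MT ξ y x a n ω ^ 2 ∂μ ≤ 8 * C * erwL n := by
    refine bN.trans ?_
    have : ∑ k ∈ range n, ∫ ω, ξ k ω ^ 2 ∂μ ≤ ∑ k ∈ range n, ∫ ω, y k ω ^ 2 ∂μ := by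
      refine sum_le_sum fun k _ => integral_mono ?_ (h.int_y_pow k 2) fun ω => sq_le_sq.2 (hb' k ω)
      refine int_of_bdd (((hξ k).mono (𝒢.le k) le_rfl).pow_const 2) 1 fun ω => ?_
      rw [abs_pow]
      exact pow_le_one₀ (abs_nonneg _) (hb k ω)
    linarith [sum_m2 hC h2 n]
  have iR : ∀ k ∈ range n, Integrable (fun ω => y k ω ^ 2 * (1 / ((k : ℝ) + 2))) μ :=
    fun k _ => (h.int_y_pow k 2).mul_const _
  have iR' := integrable_finsetSum _ iR
  have bR : ∫ ω, ∑ k ∈ range n, y k ω ^ 2 * (1 / ((k : ℝ) + 2)) ∂μ ≤ C := by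
    rw [integral_finsetSum _ iR]
    calc _ ≤ ∑ k ∈ range n, C * (1 / (((k : ℝ) + 1) * ((k : ℝ) + 2))) := by
          refine sum_le_sum fun k _ => ?_
          rw [integral_mul_const]
          calc _ ≤ C / ((k : ℝ) + 1) * (1 / ((k : ℝ) + 2)) := by gcongr; exact h2 k
            _ = _ := by field_simp
      _ = C * _ := (mul_sum _ _ _).symm
      _ ≤ C * 1 := by gcongr; exact erw_sum_tele_le n
      _ = C := by ring
  have bq : ∫ ω, ((n : ℝ) + 1) * y n ω ^ 2 ∂μ ≤ C := by
    rw [integral_const_mul]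
    have := h2 n
    rw [le_div_iff₀ (by positivity)] at this
    linarith
  have iq := (h.int_y_pow n 2).const_mul ((n : ℝ) + 1)
  have hAm : Measurable (AA y n) := (h.AA_meas (Nat.le_succ n)).mono (𝒢.le n) le_rfl
  have iA : Integrable (fun ω => |(1 - 2 * a) * AA y n ω - erwL n|) μ := by
    refine Integrable.abs (Integrable.sub (Integrable.const_mul ?_ _) (integrable_const _))
    refine int_of_bdd hAm n fun ω => ?_
    rw [abs_of_nonneg (AA_nonneg _ _ _)]
    exact h.AA_le n ω
  have iN' := iN.mul_const (1 / s)
  have iR3 := iR'.const_mul 3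
  calc _ ≤ ∫ ω, (3 * (∑ k ∈ range n, y k ω ^ 2 * (1 / ((k : ℝ) + 2)))
          + MT ξ y x a n ω ^ 2 * (1 / s) + ((n : ℝ) + 1) * y n ω ^ 2 + (1 + s)) ∂μ := by
        refine integral_mono iA (((iR3.fun_add iN').fun_add iq).fun_add (integrable_const _))
          fun ω => ?_
        have hi := h.ident n ω
        have hsplit : AA y n ω = (∑ k ∈ range n, ((k : ℝ) + 1) / ((k : ℝ) + 2) * y k ω ^ 2)
            + ∑ k ∈ range n, y k ω ^ 2 * (1 / ((k : ℝ) + 2)) := by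
          rw [AA, ← sum_add_distrib]
          refine sum_congr rfl fun k _ => ?_
          field_simp
          ring
        have hR0 : 0 ≤ ∑ k ∈ range n, y k ω ^ 2 * (1 / ((k : ℝ) + 2)) :=
          sum_nonneg fun k _ => by positivity
        have hq0 : 0 ≤ ((n : ℝ) + 1) * y n ω ^ 2 := by positivity
        set R := ∑ k ∈ range n, y k ω ^ 2 * (1 / ((k : ℝ) + 2))
        set M := MT ξ y x a n ω
        have hM : 2 * |M| ≤ M ^ 2 * (1 / s) + s := by
          have e : M ^ 2 * (1 / s) + s - 2 * |M| = (|M| - s) ^ 2 / s := by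
            rw [← sq_abs M]; field_simp; ring
          have : 0 ≤ (|M| - s) ^ 2 / s := by positivity
          linarith
        have e : (1 - 2 * a) * AA y n ω - erwL n
            = (1 - 2 * a) * R + 2 * M + (1 - ((n : ℝ) + 1) * y n ω ^ 2) := by
          rw [hsplit]
          linear_combination hi
        have hab := abs_le.1 h.ha
        have f1 : -(3 * R) ≤ (1 - 2 * a) * R := by nlinarith
        have f2 : (1 - 2 * a) * R ≤ 3 * R := by nlinarith
        have f3 := neg_abs_le M
        have f4 := le_abs_self M
        simp only
        rw [e, abs_le]
        constructor <;> linarith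
    _ = 3 * (∫ ω, (∑ k ∈ range n, y k ω ^ 2 * (1 / ((k : ℝ) + 2))) ∂μ)
          + (∫ ω, MT ξ y x a n ω ^ 2 ∂μ) * (1 / s) + (∫ ω, ((n : ℝ) + 1) * y n ω ^ 2 ∂μ)
          + (1 + s) := by
        rw [integral_add ((iR3.fun_add iN').fun_add iq) (integrable_const _),
          integral_add (iR3.fun_add iN') iq, integral_add iR3 iN', integral_const_mul,
          integral_mul_const]
        simp
    _ ≤ 3 * C + 8 * C * erwL n * (1 / s) + C + (1 + s) := by gcongr
    _ = 3 * C + 8 * C * s + C + (1 + s) := by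
        rw [← hss]; field_simp
    _ ≤ _ := by nlinarith

/-! ### Characteristic function estimate -/

/-- Truncated weights. -/
def zz (y : ℕ → Ω → ℝ) (R : ℝ) (k : ℕ) (ω : Ω) : ℝ := if AA y (k + 1) ω ≤ R then y k ω else 0

lemma zz_meas (h : ErwRed μ 𝒢 y x a) (R : ℝ) (k : ℕ) : Measurable[𝒢 k] (zz y R k) := by
  refine Measurable.ite ?_ (h.my k) measurable_const
  exact measurableSet_le (h.AA_meas le_rfl) measurable_const

lemma zz_abs (y : ℕ → Ω → ℝ) (R : ℝ) (k : ℕ) (ω : Ω) : |zz y R k ω| ≤ |y k ω| := by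
  unfold zz
  split_ifs
  · exact le_rfl
  · simp

lemma AA_zz_le (y : ℕ → Ω → ℝ) {R : ℝ} (hR : 0 ≤ R) (n : ℕ) (ω : Ω) : AA (zz y R) n ω ≤ R := by
  induction n with
  | zero => simpa [AA] using hR
  | succ n ih =>
    by_cases hc : AA y (n + 1) ω ≤ R
    · refine le_trans (sum_le_sum fun k _ => ?_) hc
      exact sq_le_sq.2 (zz_abs y R k ω)
    · rw [AA_succ]
      have : zz y R n ω = 0 := if_neg hc
      rw [this]
      simpa using ih

lemma zz_eq (y : ℕ → Ω → ℝ) {R : ℝ} {n : ℕ} {ω : Ω} (hA : AA y n ω ≤ R) {k : ℕ} (hk : k < n) :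
    zz y R k ω = y k ω :=
  if_pos ((AA_mono y ω (by omega : k + 1 ≤ n)).trans hA)

lemma AA_zz_eq (y : ℕ → Ω → ℝ) {R : ℝ} {n : ℕ} {ω : Ω} (hA : AA y n ω ≤ R) :
    AA (zz y R) n ω = AA y n ω :=
  sum_congr rfl fun k hk => by rw [zz_eq y hA (mem_range.1 hk)]

lemma MT_zz_eq {R : ℝ} {n : ℕ} {ω : Ω} (hA : AA y n ω ≤ R) :
    MT (zz y R) y x a n ω = MT y y x a n ω :=
  sum_congr rfl fun k hk => by rw [zz_eq y hA (mem_range.1 hk)]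

def UU (y x : ℕ → Ω → ℝ) (a R r : ℝ) (n : ℕ) (ω : Ω) : ℂ :=
  Complex.exp (Complex.I * ((r * MT (zz y R) y x a n ω : ℝ) : ℂ))
    * Complex.exp (((r ^ 2 / 2 * AA (zz y R) n ω : ℝ) : ℂ))

lemma norm_expI (s : ℝ) : ‖Complex.exp (Complex.I * (s : ℂ))‖ = 1 := by
  rw [mul_comm]; exact Complex.norm_exp_ofReal_mul_I s

lemma norm_expR (s : ℝ) : ‖Complex.exp (s : ℂ)‖ = Real.exp s := by
  rw [Complex.norm_exp]; simp

lemma exp_step (u b s : ℝ) (hs : s = 1 ∨ s = -1) :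
    Complex.exp (Complex.I * ((u * (s - b) : ℝ) : ℂ)) =
      Complex.exp (Complex.I * ((-(u * b) : ℝ) : ℂ)) *
        ((Real.cos u : ℂ) + Complex.I * s * Real.sin u) := by
  have : (Real.cos u : ℂ) + Complex.I * s * Real.sin u
      = Complex.exp (Complex.I * ((u * s : ℝ) : ℂ)) := by
    rw [mul_comm Complex.I ((u * s : ℝ) : ℂ), Complex.exp_mul_I]
    rcases hs with rfl | rfl
    · simp; ring
    · simp; ring
  rw [this, ← Complex.exp_add]
  congr 1
  push_cast
  ring

lemma UU_meas (h : ErwRed μ 𝒢 y x a) (R r : ℝ) (n : ℕ) : Measurable[𝒢 n] (UU y x a R r n) := by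
  have h1 : Measurable[𝒢 n] (MT (zz y R) y x a n) := h.MT_meas (h.zz_meas R) n
  have h2 : Measurable[𝒢 n] (AA (zz y R) n) := by
    refine Finset.measurable_fun_sum _ fun k hk => ?_
    exact ((h.zz_meas R k).mono (𝒢.mono (mem_range.1 hk).le) le_rfl).pow_const 2
  exact ((Complex.measurable_ofReal.comp (h1.const_mul r)).const_mul Complex.I).cexp.mul
    (Complex.measurable_ofReal.comp (h2.const_mul _)).cexp

lemma UU_norm (a R r : ℝ) (n : ℕ) (ω : Ω) :
    ‖UU y x a R r n ω‖ = Real.exp (r ^ 2 / 2 * AA (zz y R) n ω) := by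
  rw [UU, norm_mul, norm_expI, norm_expR, one_mul]

lemma UU_step (h : ErwRed μ 𝒢 y x a) {R r : ℝ} (hR : 0 ≤ R) (hr : |r| ≤ 1 / 2) (n : ℕ) :
    ‖(∫ ω, UU y x a R r (n + 1) ω ∂μ) - ∫ ω, UU y x a R r n ω ∂μ‖
      ≤ Real.exp (r ^ 2 / 2 * R) *
        (r ^ 2 * (∫ ω, y n ω ^ 4 ∂μ) + 5 * |r| ^ 3 * ∫ ω, y n ω ^ 2 ∂μ) := by
  set K := Real.exp (r ^ 2 / 2 * R) with hK
  set u : Ω → ℝ := fun ω => r * zz y R n ω with hu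
  set b : Ω → ℝ := fun ω => a * y n ω with hbd
  set G : Ω → ℂ := fun ω => UU y x a R r n ω * Complex.exp ((u ω ^ 2 / 2 : ℝ) : ℂ)
    * Complex.exp (Complex.I * ((-(u ω * b ω) : ℝ) : ℂ)) with hG
  have mu' : Measurable[𝒢 n] u := (h.zz_meas R n).const_mul r
  have mb' : Measurable[𝒢 n] b := (h.my n).const_mul a
  have mG : Measurable[𝒢 n] G :=
    ((h.UU_meas R r n).mul (Complex.measurable_ofReal.comp ((mu'.pow_const 2).div_const 2)).cexp).mul
      ((Complex.measurable_ofReal.comp (mu'.mul mb').neg).const_mul Complex.I).cexp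
  have nG : ∀ ω, ‖G ω‖ ≤ K := by
    intro ω
    simp only [hG]
    rw [norm_mul, norm_mul, norm_expI, norm_expR, UU_norm, mul_one, ← Real.exp_add, hK]
    refine Real.exp_le_exp.2 ?_
    have := AA_zz_le y hR (n + 1) ω
    rw [AA_succ] at this
    simp only [hu]
    nlinarith [sq_nonneg r]
  have hK0 : 0 ≤ K := (Real.exp_pos _).le
  have mc : Measurable[𝒢 n] fun ω => ((Real.cos (u ω) : ℝ) : ℂ) :=
    Complex.measurable_ofReal.comp (Real.measurable_cos.comp mu')
  have ms : Measurable[𝒢 n] fun ω => Complex.I * ((Real.sin (u ω) : ℝ) : ℂ) :=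
    (Complex.measurable_ofReal.comp (Real.measurable_sin.comp mu')).const_mul _
  have nc : ∀ ω, ‖((Real.cos (u ω) : ℝ) : ℂ)‖ ≤ 1 := fun ω => by
    rw [Complex.norm_real]; exact Real.abs_cos_le_one _
  have ns : ∀ ω, ‖Complex.I * ((Real.sin (u ω) : ℝ) : ℂ)‖ ≤ 1 := fun ω => by
    rw [norm_mul, Complex.norm_I, one_mul, Complex.norm_real]; exact Real.abs_sin_le_one _
  have nb : ∀ ω, |b ω| ≤ |y n ω| := fun ω => by
    simp only [hbd]; rw [abs_mul]; exact mul_le_of_le_one_left (abs_nonneg _) h.ha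
  have nb1 : ∀ ω, |b ω| ≤ 1 := fun ω => (nb ω).trans (h.abs_y n ω)
  have nu : ∀ ω, |u ω| ≤ |r| * |y n ω| := fun ω => by
    simp only [hu]; rw [abs_mul]; exact mul_le_mul_of_nonneg_left (zz_abs y R n ω) (abs_nonneg _)
  have toI : ∀ (f : Ω → ℂ) (D : ℝ), Measurable f → (∀ ω, ‖f ω‖ ≤ D) → Integrable f μ :=
    fun f D hf hD => Integrable.of_bound hf.aestronglyMeasurable D (Eventually.of_forall hD)
  have le' : ∀ f : Ω → ℂ, Measurable[𝒢 n] f → Measurable f := fun f hf => hf.mono (𝒢.le n) le_rfl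
  have nGs : ∀ ω, ‖G ω * (Complex.I * ((Real.sin (u ω) : ℝ) : ℂ))‖ ≤ K := fun ω => by
    rw [norm_mul]
    calc _ ≤ K * 1 := mul_le_mul (nG ω) (ns ω) (norm_nonneg _) hK0
      _ = K := mul_one K
  have nGc : ∀ ω, ‖G ω * ((Real.cos (u ω) : ℝ) : ℂ)‖ ≤ K := fun ω => by
    rw [norm_mul]
    calc _ ≤ K * 1 := mul_le_mul (nG ω) (nc ω) (norm_nonneg _) hK0
      _ = K := mul_one K
  have iGc : Integrable (fun ω => G ω * ((Real.cos (u ω) : ℝ) : ℂ)) μ :=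
    toI _ K (le' _ (mG.mul mc)) nGc
  have iGs : ∀ z : Ω → ℝ, Measurable z → (∀ ω, |z ω| ≤ 1) →
      Integrable (fun ω => G ω * (Complex.I * ((Real.sin (u ω) : ℝ) : ℂ)) * (z ω : ℂ)) μ := by
    intro z hz hz1
    refine toI _ K ((le' _ (mG.mul ms)).mul (Complex.measurable_ofReal.comp hz)) fun ω => ?_
    rw [norm_mul, Complex.norm_real]
    calc _ ≤ K * 1 := mul_le_mul (nGs ω) (hz1 ω) (abs_nonneg _) hK0
      _ = K := mul_one K
  have iU : Integrable (UU y x a R r n) μ := by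
    refine toI _ K (le' _ (h.UU_meas R r n)) fun ω => ?_
    rw [UU_norm, hK]
    refine Real.exp_le_exp.2 ?_
    have := AA_zz_le y hR n ω
    gcongr
  have iy := h.int_y_pow n 2
  have e1 : ∫ ω, UU y x a R r (n + 1) ω ∂μ
      = ∫ ω, (G ω * ((Real.cos (u ω) : ℝ) : ℂ)
        + G ω * (Complex.I * ((Real.sin (u ω) : ℝ) : ℂ)) * ((b ω : ℝ) : ℂ)) ∂μ := by
    have pc : ∫ ω, G ω * (Complex.I * ((Real.sin (u ω) : ℝ) : ℂ)) * (x n ω : ℂ) ∂μ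
        = ∫ ω, G ω * (Complex.I * ((Real.sin (u ω) : ℝ) : ℂ)) * ((b ω : ℝ) : ℂ) ∂μ :=
      h.pullC n (fun ω => G ω * (Complex.I * ((Real.sin (u ω) : ℝ) : ℂ))) (mG.mul ms) K nGs
    rw [integral_add iGc (iGs b (mb'.mono (𝒢.le n) le_rfl) nb1), ← pc,
      ← integral_add iGc (iGs (x n) (h.measx n) (h.abs_x n))]
    congr 1
    ext ω
    have st := exp_step (u ω) (b ω) (x n ω) (h.hx n ω)
    have e2 : UU y x a R r (n + 1) ω = UU y x a R r n ω * Complex.exp ((u ω ^ 2 / 2 : ℝ) : ℂ)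
        * Complex.exp (Complex.I * ((u ω * (x n ω - b ω) : ℝ) : ℂ)) := by
      unfold UU
      rw [MT_succ, AA_succ, ← Complex.exp_add, ← Complex.exp_add, ← Complex.exp_add,
        ← Complex.exp_add]
      congr 1
      simp only [hu, hbd]
      push_cast
      ring
    rw [e2, st]
    simp only [hG]
    ring
  rw [e1, ← integral_sub (iGc.fun_add (iGs b (mb'.mono (𝒢.le n) le_rfl) nb1)) iU]
  have ib : Integrable (fun ω => K * (r ^ 2 * y n ω ^ 4 + 5 * |r| ^ 3 * y n ω ^ 2)) μ :=
    (((h.int_y_pow n 4).const_mul _).fun_add ((h.int_y_pow n 2).const_mul _)).const_mul K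
  refine (norm_integral_le_of_norm_le ib (Eventually.of_forall fun ω => ?_)).trans ?_
  · have eU : UU y x a R r n ω = G ω * (Complex.exp (Complex.I * (u ω * b ω))
        * Complex.exp (-(u ω ^ 2 / 2))) := by
      simp only [hG]
      rw [mul_assoc, mul_assoc, ← Complex.exp_add, ← Complex.exp_add, ← Complex.exp_add]
      have : (((u ω ^ 2 / 2 : ℝ) : ℂ) + (Complex.I * ((-(u ω * b ω) : ℝ) : ℂ)
        + (Complex.I * (u ω * b ω) + -((u ω : ℂ) ^ 2 / 2)))) = 0 := by
        push_cast; ring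
      rw [this, Complex.exp_zero, mul_one]
    have eq : G ω * ((Real.cos (u ω) : ℝ) : ℂ)
        + G ω * (Complex.I * ((Real.sin (u ω) : ℝ) : ℂ)) * ((b ω : ℝ) : ℂ) - UU y x a R r n ω
        = G ω * ((Real.cos (u ω) : ℂ) + Complex.I * b ω * Real.sin (u ω)
      - Complex.exp (Complex.I * (u ω * b ω)) * Complex.exp (-(u ω ^ 2 / 2))) := by
      rw [eU]; ring
    rw [eq, norm_mul]
    have hu2 : |u ω| ≤ 1 / 2 := (nu ω).trans (by
      have := mul_le_mul hr (h.abs_y n ω) (abs_nonneg _) (by norm_num)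
      linarith)
    refine mul_le_mul (nG ω) ((erw_expansion (u ω) (b ω) hu2 (nb1 ω)).trans ?_)
      (norm_nonneg _) hK0
    have g1 : u ω ^ 2 ≤ r ^ 2 * y n ω ^ 2 := by
      rw [← mul_pow]; refine sq_le_sq.2 ?_; exact (nu ω).trans_eq (abs_mul _ _).symm
    have g2 : b ω ^ 2 ≤ y n ω ^ 2 := sq_le_sq.2 (nb ω)
    have g3 : |u ω| ^ 3 ≤ |r| ^ 3 * y n ω ^ 2 := by
      calc |u ω| ^ 3 ≤ (|r| * |y n ω|) ^ 3 := pow_le_pow_left₀ (abs_nonneg _) (nu ω) 3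
        _ = |r| ^ 3 * |y n ω| ^ 3 := by ring
        _ ≤ |r| ^ 3 * |y n ω| ^ 2 := by
          gcongr ?_ * ?_
          exact pow_le_pow_of_le_one (abs_nonneg _) (h.abs_y n ω) (by norm_num)
        _ = _ := by rw [sq_abs]
    have g4 : u ω ^ 2 * b ω ^ 2 ≤ r ^ 2 * y n ω ^ 2 * y n ω ^ 2 := by gcongr
    nlinarith
  · rw [integral_const_mul, integral_add ((h.int_y_pow n 4).const_mul _)
      ((h.int_y_pow n 2).const_mul _), integral_const_mul, integral_const_mul]

lemma UU_total (h : ErwRed μ 𝒢 y x a) {R r : ℝ} (hR : 0 ≤ R) (hr : |r| ≤ 1 / 2) (n : ℕ) :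
    ‖(∫ ω, UU y x a R r n ω ∂μ) - 1‖
      ≤ Real.exp (r ^ 2 / 2 * R) *
        (r ^ 2 * (∑ k ∈ range n, ∫ ω, y k ω ^ 4 ∂μ)
          + 5 * |r| ^ 3 * ∑ k ∈ range n, ∫ ω, y k ω ^ 2 ∂μ) := by
  induction n with
  | zero => simp [UU, MT, AA]
  | succ n ih =>
    have := h.UU_step hR hr n
    rw [sum_range_succ, sum_range_succ]
    have e : (∫ ω, UU y x a R r (n + 1) ω ∂μ) - 1
      = ((∫ ω, UU y x a R r (n + 1) ω ∂μ) - ∫ ω, UU y x a R r n ω ∂μ)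
        + ((∫ ω, UU y x a R r n ω ∂μ) - 1) := by ring
    rw [e]
    refine (norm_add_le _ _).trans ?_
    linarith


/-! ### The central limit theorem -/

lemma abs_one_sub_exp (s : ℝ) : |1 - Real.exp s| ≤ |s| * Real.exp |s| := by
  rcases le_total 0 s with hs | hs
  · rw [abs_of_nonneg hs]
    have h1 : 1 ≤ Real.exp s := Real.one_le_exp hs
    rw [abs_of_nonpos (by linarith)]
    have h2 := Real.add_one_le_exp (-s)
    have h3 : Real.exp (-s) * Real.exp s = 1 := by rw [← Real.exp_add]; simp
    nlinarith [Real.exp_pos s]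
  · rw [abs_of_nonpos hs]
    have h1 : Real.exp s ≤ 1 := Real.exp_le_one_iff.2 hs
    rw [abs_of_nonneg (by linarith)]
    have h2 := Real.add_one_le_exp s
    have h3 : 1 ≤ Real.exp (-s) := Real.one_le_exp (by linarith)
    nlinarith

lemma cf_bound (h : ErwRed μ 𝒢 y x a) {B t r : ℝ} (hB : 0 < B) (hrB : r ^ 2 * B = t ^ 2) (n : ℕ) :
    ‖(∫ ω, Complex.exp (Complex.I * ((r * MT y y x a n ω : ℝ) : ℂ)) ∂μ)
        - Complex.exp ((-(t ^ 2 / 2) : ℝ) : ℂ)‖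
      ≤ ‖(∫ ω, UU y x a (2 * B) r n ω ∂μ) - 1‖
        + (t ^ 2 / 2 * Real.exp (t ^ 2 / 2) + 2) * ∫ ω, |AA y n ω / B - 1| ∂μ := by
  have hR : 0 ≤ 2 * B := by linarith
  set e : ℂ := Complex.exp ((-(t ^ 2 / 2) : ℝ) : ℂ) with he
  have hAm : Measurable (AA y n) := (h.AA_meas (Nat.le_succ n)).mono (𝒢.le n) le_rfl
  have mM : Measurable (MT y y x a n) := (h.MT_meas h.my n).mono (𝒢.le n) le_rfl
  have iA : Integrable (fun ω => |AA y n ω / B - 1|) μ := by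
    refine Integrable.abs (Integrable.sub (Integrable.div_const ?_ _) (integrable_const _))
    refine int_of_bdd hAm n fun ω => ?_
    rw [abs_of_nonneg (AA_nonneg _ _ _)]
    exact h.AA_le n ω
  have iE : Integrable (fun ω => Complex.exp (Complex.I * ((r * MT y y x a n ω : ℝ) : ℂ))) μ := by
    refine Integrable.of_bound (C := 1) ?_ (Eventually.of_forall fun ω => (norm_expI _).le)
    exact ((Complex.measurable_ofReal.comp (mM.const_mul r)).const_mul
      Complex.I).cexp.aestronglyMeasurable
  have iU : Integrable (fun ω => UU y x a (2 * B) r n ω) μ := by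
    refine Integrable.of_bound (C := Real.exp (r ^ 2 / 2 * (2 * B)))
      ((h.UU_meas (2 * B) r n).mono (𝒢.le n) le_rfl).aestronglyMeasurable
      (Eventually.of_forall fun ω => ?_)
    rw [UU_norm]
    refine Real.exp_le_exp.2 ?_
    have := AA_zz_le y hR n ω
    gcongr
  have hsplit : (∫ ω, Complex.exp (Complex.I * ((r * MT y y x a n ω : ℝ) : ℂ)) ∂μ) - e
      = e * ((∫ ω, UU y x a (2 * B) r n ω ∂μ) - 1)
        + ∫ ω, (Complex.exp (Complex.I * ((r * MT y y x a n ω : ℝ) : ℂ))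
          - e * UU y x a (2 * B) r n ω) ∂μ := by
    rw [integral_sub iE (iU.const_mul e), integral_const_mul]
    ring
  rw [hsplit]
  refine (norm_add_le _ _).trans (add_le_add ?_ ?_)
  · rw [norm_mul, he, norm_expR]
    refine mul_le_of_le_one_left (norm_nonneg _) (Real.exp_le_one_iff.2 ?_)
    nlinarith [sq_nonneg t]
  · rw [← integral_const_mul]
    refine norm_integral_le_of_norm_le (iA.const_mul _) (Eventually.of_forall fun ω => ?_)
    set Z := AA (zz y (2 * B)) n ω with hZ
    have hZ0 : 0 ≤ Z := AA_nonneg _ _ _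
    have hZ2 : Z ≤ 2 * B := AA_zz_le y hR n ω
    have hZ1 : |Z / B - 1| ≤ 1 := by
      have e1 : Z / B ≤ 2 := by rw [div_le_iff₀ hB]; exact hZ2
      have e2 : 0 ≤ Z / B := by positivity
      rw [abs_le]; constructor <;> linarith
    have key : |Z / B - 1| ≤ |AA y n ω / B - 1| ∧
        ‖Complex.exp (Complex.I * ((r * MT y y x a n ω : ℝ) : ℂ))
          - Complex.exp (Complex.I * ((r * MT (zz y (2 * B)) y x a n ω : ℝ) : ℂ))‖
          ≤ 2 * |AA y n ω / B - 1| := by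
      by_cases hc : AA y n ω ≤ 2 * B
      · rw [hZ, AA_zz_eq y hc, MT_zz_eq hc]
        simp
      · have h1 : 1 ≤ |AA y n ω / B - 1| := by
          have : 2 ≤ AA y n ω / B := by
            rw [le_div_iff₀ hB]; exact (not_le.1 hc).le
          exact le_trans (by linarith) (le_abs_self _)
        refine ⟨hZ1.trans h1, (norm_sub_le _ _).trans ?_⟩
        rw [norm_expI, norm_expI]
        linarith
    have e3 : Complex.exp (Complex.I * ((r * MT y y x a n ω : ℝ) : ℂ)) - e * UU y x a (2 * B) r n ω
        = (Complex.exp (Complex.I * ((r * MT y y x a n ω : ℝ) : ℂ))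
          - Complex.exp (Complex.I * ((r * MT (zz y (2 * B)) y x a n ω : ℝ) : ℂ)))
          + Complex.exp (Complex.I * ((r * MT (zz y (2 * B)) y x a n ω : ℝ) : ℂ))
            * ((1 - Real.exp (t ^ 2 / 2 * (Z / B - 1)) : ℝ) : ℂ) := by
      have e4 : e * UU y x a (2 * B) r n ω
          = Complex.exp (Complex.I * ((r * MT (zz y (2 * B)) y x a n ω : ℝ) : ℂ))
            * ((Real.exp (t ^ 2 / 2 * (Z / B - 1)) : ℝ) : ℂ) := by
        have e5 : t ^ 2 / 2 * (Z / B - 1) = -(t ^ 2 / 2) + r ^ 2 / 2 * Z := by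
          rw [← hrB]; field_simp; ring
        have e6 : ((Real.exp (-(t ^ 2 / 2) + r ^ 2 / 2 * Z) : ℝ) : ℂ)
            = Complex.exp ((-(t ^ 2 / 2) : ℝ) : ℂ) * Complex.exp ((r ^ 2 / 2 * Z : ℝ) : ℂ) := by
          rw [Real.exp_add, Complex.ofReal_mul, Complex.ofReal_exp, Complex.ofReal_exp]
        rw [e5, e6, UU, he]
        ring
      rw [e4]; push_cast; ring
    rw [e3]
    have ht : 0 ≤ t ^ 2 / 2 := by positivity
    calc _ ≤ 2 * |AA y n ω / B - 1|
          + t ^ 2 / 2 * |Z / B - 1| * Real.exp (t ^ 2 / 2) := by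
          refine (norm_add_le _ _).trans (add_le_add key.2 ?_)
          rw [norm_mul, norm_expI, one_mul, Complex.norm_real]
          refine (abs_one_sub_exp _).trans ?_
          rw [abs_mul, abs_of_nonneg ht]
          gcongr
          exact mul_le_of_le_one_right ht hZ1
      _ ≤ 2 * |AA y n ω / B - 1|
          + t ^ 2 / 2 * |AA y n ω / B - 1| * Real.exp (t ^ 2 / 2) := by
          gcongr ?_ + _ * ?_ * _
          · exact le_rfl
          · exact key.1
      _ = _ := by ring

lemma L1_tendsto (h : ErwRed μ 𝒢 y x a) (ha : a < 1 / 2) :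
    Tendsto (fun n => ∫ ω, |AA y n ω / (erwL n / (1 - 2 * a)) - 1| ∂μ) atTop (𝓝 0) := by
  obtain ⟨C, hC, h2, -⟩ := h.moments ha
  have hL := erwL_tendsto
  have hlim : Tendsto (fun n => (1 + 8 * C) * ((erwL n)⁻¹ + (√(erwL n))⁻¹)) atTop (𝓝 0) := by
    have := ((tendsto_inv_atTop_zero.comp hL).add
      (tendsto_inv_atTop_zero.comp (Real.tendsto_sqrt_atTop.comp hL))).const_mul (1 + 8 * C)
    simpa using this
  refine squeeze_zero' (Eventually.of_forall fun n => integral_nonneg fun ω => abs_nonneg _) ?_ hlim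
  filter_upwards [hL.eventually_gt_atTop 0] with n hn
  have e : ∀ ω, |AA y n ω / (erwL n / (1 - 2 * a)) - 1|
      = (erwL n)⁻¹ * |(1 - 2 * a) * AA y n ω - erwL n| := fun ω => by
    have h3 : (0 : ℝ) < 1 - 2 * a := by linarith
    have h5 : AA y n ω / (erwL n / (1 - 2 * a)) - 1
        = (erwL n)⁻¹ * ((1 - 2 * a) * AA y n ω - erwL n) := by field_simp
    rw [h5, abs_mul, abs_of_pos (inv_pos.2 hn)]
  simp_rw [e]
  rw [integral_const_mul]
  have hs : √(erwL n) * √(erwL n) = erwL n := Real.mul_self_sqrt hn.le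
  have hs0 : 0 < √(erwL n) := Real.sqrt_pos.2 hn
  calc _ ≤ (erwL n)⁻¹ * ((1 + 8 * C) * (1 + √(erwL n))) := by
        gcongr; exact h.L1_bound hC h2 n hn
    _ = _ := by
        have : (√(erwL n))⁻¹ = (erwL n)⁻¹ * √(erwL n) := by
          rw [← hs]; simp only [hs]; field_simp; linarith [hs]
        rw [this]; ring

lemma cf_tendsto (h : ErwRed μ 𝒢 y x a) (ha : a < 1 / 2) (t : ℝ) :
    Tendsto (fun n => ∫ ω, Complex.exp (Complex.I *
      ((t / √(erwL n / (1 - 2 * a)) * MT y y x a n ω : ℝ) : ℂ)) ∂μ) atTop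
      (𝓝 (Complex.exp ((-(t ^ 2 / 2) : ℝ) : ℂ))) := by
  obtain ⟨C, hC, h2, h4⟩ := h.moments ha
  have h3 : (0 : ℝ) < 1 - 2 * a := by linarith
  have hL1 := h.L1_tendsto ha
  have hB : Tendsto (fun n => erwL n / (1 - 2 * a)) atTop atTop :=
    erwL_tendsto.atTop_div_const h3
  have hi : Tendsto (fun n => (√(erwL n / (1 - 2 * a)))⁻¹) atTop (𝓝 0) :=
    tendsto_inv_atTop_zero.comp (Real.tendsto_sqrt_atTop.comp hB)
  have hr : Tendsto (fun n => |t / √(erwL n / (1 - 2 * a))|) atTop (𝓝 0) := by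
    simpa [div_eq_mul_inv] using (hi.const_mul t).abs
  have hlim : Tendsto (fun n => Real.exp (t ^ 2) *
      (|t / √(erwL n / (1 - 2 * a))| ^ 2 * (2 * C)
        + 10 * C * (1 - 2 * a) * t ^ 2 * |t / √(erwL n / (1 - 2 * a))|)
      + (t ^ 2 / 2 * Real.exp (t ^ 2 / 2) + 2)
        * ∫ ω, |AA y n ω / (erwL n / (1 - 2 * a)) - 1| ∂μ) atTop (𝓝 0) := by
    have := ((((hr.pow 2).mul_const (2 * C)).add
      (hr.const_mul (10 * C * (1 - 2 * a) * t ^ 2))).const_mul (Real.exp (t ^ 2))).add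
      (hL1.const_mul (t ^ 2 / 2 * Real.exp (t ^ 2 / 2) + 2))
    simpa using this
  rw [tendsto_iff_norm_sub_tendsto_zero]
  refine squeeze_zero' (Eventually.of_forall fun n => norm_nonneg _) ?_ hlim
  filter_upwards [hB.eventually_gt_atTop 0, hr.eventually_le_const (by norm_num : (0 : ℝ) < 1 / 2)]
    with n hBn hrn
  set B := erwL n / (1 - 2 * a) with hBd
  set r := t / √B with hrd
  have hrB : r ^ 2 * B = t ^ 2 := by
    rw [hrd, div_pow, Real.sq_sqrt hBn.le]; field_simp
  refine (h.cf_bound hBn hrB n).trans (add_le_add ?_ le_rfl)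
  refine (h.UU_total (by linarith) hrn n).trans ?_
  have e1 : r ^ 2 / 2 * (2 * B) = t ^ 2 := by rw [← hrB]; ring
  rw [e1]
  have e2 : erwL n = B * (1 - 2 * a) := by rw [hBd]; field_simp
  have s4 := sum_m4 hC h4 n
  have s2 := sum_m2 hC h2 n
  rw [e2] at s2
  have e3 : 10 * C * (1 - 2 * a) * t ^ 2 * |r| = 5 * |r| ^ 3 * (2 * C * (B * (1 - 2 * a))) := by
    rw [← hrB, ← sq_abs r]; ring
  rw [e3, sq_abs]
  gcongr

lemma clt (h : ErwRed μ 𝒢 y x a) (ha : a < 1 / 2) :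
    TendstoInDistribution (fun (n : ℕ) ω => (√(erwL n / (1 - 2 * a)))⁻¹ * MT y y x a n ω) atTop
      (id : ℝ → ℝ) (fun _ => μ) (gaussianReal 0 1) where
  forall_aemeasurable n :=
    (((h.MT_meas h.my n).mono (𝒢.le n) le_rfl).const_mul _).aemeasurable
  aemeasurable_limit := aemeasurable_id
  tendsto := by
    refine ProbabilityMeasure.tendsto_iff_tendsto_charFun.2 fun t => ?_
    have e0 : charFun ((gaussianReal 0 1).map id) t = Complex.exp ((-(t ^ 2 / 2) : ℝ) : ℂ) := by
      rw [Measure.map_id, charFun_gaussianReal]; congr 1; push_cast; ring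
    have e1 : ∀ n, charFun (μ.map
        (fun ω => (√(erwL n / (1 - 2 * a)))⁻¹ * MT y y x a n ω)) t
        = ∫ ω, Complex.exp (Complex.I *
          ((t / √(erwL n / (1 - 2 * a)) * MT y y x a n ω : ℝ) : ℂ)) ∂μ := fun n => by
      rw [charFun_apply_real, integral_map
        (((h.MT_meas h.my n).mono (𝒢.le n) le_rfl).const_mul _).aemeasurable
        (by fun_prop)]
      congr 1
      ext ω
      congr 1
      push_cast
      ring
    have := h.cf_tendsto ha t
    simp only [← e1, ← e0] at this
    exact this

lemma ratio_tendsto (h : ErwRed μ 𝒢 y x a) (ha : a < 1 / 2) :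
    TendstoInMeasure μ (fun n ω => (erwL n / (1 - 2 * a)) / AA y n ω) atTop (fun _ => (1 : ℝ)) := by
  have h3 : (0 : ℝ) < 1 - 2 * a := by linarith
  have hB : Tendsto (fun n => erwL n / (1 - 2 * a)) atTop atTop :=
    erwL_tendsto.atTop_div_const h3
  have hL1 := h.L1_tendsto ha
  rw [tendstoInMeasure_iff_norm]
  intro ε hε
  set δ := min (1 / 2) (ε / 2) with hδ
  have hδ0 : 0 < δ := by positivity
  have hlim : Tendsto (fun n => ENNReal.ofReal
      ((∫ ω, |AA y n ω / (erwL n / (1 - 2 * a)) - 1| ∂μ) / δ)) atTop (𝓝 0) := by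
    have := ENNReal.tendsto_ofReal (hL1.div_const δ)
    simpa using this
  refine tendsto_of_tendsto_of_tendsto_of_le_of_le' tendsto_const_nhds hlim
    (Eventually.of_forall fun n => bot_le) ?_
  filter_upwards [hB.eventually_gt_atTop 0] with n hBn
  set B := erwL n / (1 - 2 * a) with hBd
  have hAm : Measurable (AA y n) := (h.AA_meas (Nat.le_succ n)).mono (𝒢.le n) le_rfl
  have iA : Integrable (fun ω => |AA y n ω / B - 1|) μ := by
    refine Integrable.abs (Integrable.sub (Integrable.div_const ?_ _) (integrable_const _))
    refine int_of_bdd hAm n fun ω => ?_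
    rw [abs_of_nonneg (AA_nonneg _ _ _)]
    exact h.AA_le n ω
  have hmk := mul_meas_ge_le_integral_of_nonneg
    (Eventually.of_forall fun ω => abs_nonneg (AA y n ω / B - 1)) iA δ
  have hsub : {ω | ε ≤ ‖B / AA y n ω - 1‖} ⊆ {ω | δ ≤ |AA y n ω / B - 1|} := by
    intro ω hω
    simp only [Set.mem_ofPred_eq, Real.norm_eq_abs] at hω ⊢
    by_contra hc
    rw [not_le] at hc
    have hc1 : |AA y n ω / B - 1| < 1 / 2 := hc.trans_le (min_le_left _ _)
    have hc2 : |AA y n ω / B - 1| < ε / 2 := hc.trans_le (min_le_right _ _)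
    set w := AA y n ω / B with hw
    have hw2 : 1 / 2 < w := by linarith [(abs_lt.1 hc1).1]
    have e : B / AA y n ω - 1 = (1 - w) / w := by
      have : B / AA y n ω = 1 / w := by rw [hw, one_div_div]
      rw [this]; field_simp
    rw [e, abs_div, abs_of_pos (by linarith : 0 < w), abs_sub_comm, le_div_iff₀ (by linarith)] at hω
    nlinarith
  refine (measure_mono hsub).trans ?_
  rw [← ENNReal.ofReal_toReal (measure_ne_top μ {ω | δ ≤ |AA y n ω / B - 1|})]
  refine ENNReal.ofReal_le_ofReal ?_
  rw [le_div_iff₀ hδ0, mul_comm]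
  exact hmk

lemma chi (h : ErwRed μ 𝒢 y x a) (ha : a < 1 / 2) (f : ℝ →ᵇ ℝ) :
    Tendsto (fun n => ∫ ω, f (MT y y x a n ω ^ 2 / AA y n ω) ∂μ) atTop
      (𝓝 (∫ z, f (z ^ 2) ∂(gaussianReal 0 1))) := by
  have h3 : (0 : ℝ) < 1 - 2 * a := by linarith
  have hB : Tendsto (fun n => erwL n / (1 - 2 * a)) atTop atTop :=
    erwL_tendsto.atTop_div_const h3
  have hAm : ∀ n, Measurable (AA y n) := fun n =>
    (h.AA_meas (Nat.le_succ n)).mono (𝒢.le n) le_rfl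
  have hd := (h.clt ha).continuous_comp_prodMk_of_tendstoInMeasure_const
    (g := fun q : ℝ × ℝ => q.1 ^ 2 * q.2) (by fun_prop) (h.ratio_tendsto ha)
    (fun n => ((hAm n).const_div _).aemeasurable)
  have ht := ProbabilityMeasure.tendsto_iff_forall_integral_tendsto.1 hd.tendsto f
  simp only [ProbabilityMeasure.coe_mk] at ht
  have e0 := integral_map hd.aemeasurable_limit
    (f.continuous.aestronglyMeasurable (μ := (gaussianReal 0 1).map _))
  have e1 := fun n => integral_map (hd.forall_aemeasurable n)
    (f.continuous.aestronglyMeasurable (μ := μ.map _))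
  rw [e0] at ht
  simp only [e1] at ht
  simp only [id, mul_one] at ht
  refine ht.congr' ?_
  filter_upwards [hB.eventually_gt_atTop 0] with n hBn
  refine integral_congr_ae (Eventually.of_forall fun ω => ?_)
  simp only
  congr 1
  rw [mul_pow, inv_pow, Real.sq_sqrt hBn.le]
  set B := erwL n / (1 - 2 * a)
  have e7 : B⁻¹ * B = 1 := inv_mul_cancel₀ hBn.ne'
  linear_combination (MT y y x a n ω ^ 2 / AA y n ω) * e7

end ErwRed

/-! ### Reduction of the elephant random walk -/

/-- The shifted filtration. -/
def erwShift {m0 : MeasurableSpace Ω} (ℱ : Filtration ℕ m0) : Filtration ℕ m0 where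
  seq k := ℱ (k + 1)
  mono' := fun _ _ hij => ℱ.mono (Nat.succ_le_succ hij)
  le' := fun k => ℱ.le (k + 1)

lemma erwS_succ (X : ℕ → Ω → ℝ) (n : ℕ) (ω : Ω) :
    erwS X (n + 1) ω = erwS X n ω + X (n + 1) ω := by
  rw [erwS, Finset.sum_Icc_succ_top (by omega)]; rfl

/-- The normalized positions. -/
def erwY (X : ℕ → Ω → ℝ) (k : ℕ) (ω : Ω) : ℝ := erwS X (k + 1) ω / ((k + 1 : ℕ) : ℝ)

lemma erw_red {m0 : MeasurableSpace Ω} {μ : Measure Ω} [IsProbabilityMeasure μ]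
    {ℱ : Filtration ℕ m0} {X : ℕ → Ω → ℝ} {p : ℝ} (hE : IsERW μ ℱ X p) :
    ErwRed μ (erwShift ℱ) (erwY X) (fun k => X (k + 2)) (2 * p - 1) := by
  obtain ⟨hp0, hp1, hX, hm, hc⟩ := hE
  refine ⟨?_, ?_, ?_, ?_, ?_, ?_, ?_⟩
  · rw [abs_le]; constructor <;> linarith
  · intro ω
    have := hX 1 le_rfl ω
    simp only [erwY, erwS]
    rcases this with h | h <;> simp [h]
  · intro k ω
    exact hX (k + 2) (by omega) ω
  · intro k ω
    simp only [erwY]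
    rw [erwS_succ X (k + 1)]
    have : ((k : ℝ) + 1) ≠ 0 := by positivity
    have : ((k : ℝ) + 2) ≠ 0 := by positivity
    push_cast
    have e : (k : ℝ) + 1 + 1 = k + 2 := by ring
    rw [e]
    field_simp
  · intro k
    refine Measurable.div_const ?_ _
    refine Finset.measurable_fun_sum _ fun j hj => ?_
    have hj := Finset.mem_Icc.1 hj
    exact (hm j hj.1).mono (ℱ.mono hj.2) le_rfl
  · intro k
    exact hm (k + 2) (by omega)
  · intro k
    exact hc (k + 1) (by omega)

lemma erw_sum_shift (g : ℕ → ℝ) (n : ℕ) :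
    ∑ k ∈ Finset.Icc 1 n, g k = ∑ k ∈ range n, g (k + 1) := by
  induction n with
  | zero => simp
  | succ n ih => rw [Finset.sum_Icc_succ_top (by omega), sum_range_succ, ih]

lemma erw_stat (X : ℕ → Ω → ℝ) (p p₀ : ℝ) (n : ℕ) (ω : Ω)
    (hA : 0 < ErwRed.AA (erwY X) n ω) :
    erwV X (n + 1) ω * (erwPhat X (n + 1) ω - p₀) ^ 2
      = ErwRed.AA (erwY X) n ω *
        (ErwRed.MT (erwY X) (erwY X) (fun k => X (k + 2)) (2 * p - 1) n ω
          / ErwRed.AA (erwY X) n ω + 2 * (p - p₀)) ^ 2 := by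
  have e1 : ∑ k ∈ Finset.Icc 1 (n + 1 - 1), (erwS X k ω / k) ^ 2 = ErwRed.AA (erwY X) n ω := by
    rw [Nat.add_sub_cancel, erw_sum_shift]; rfl
  have e2 : ∑ k ∈ Finset.Icc 1 (n + 1 - 1), (erwS X k ω / k) * (X (k + 1) ω + erwS X k ω / k)
      = ErwRed.MT (erwY X) (erwY X) (fun k => X (k + 2)) (2 * p - 1) n ω
        + 2 * p * ErwRed.AA (erwY X) n ω := by
    rw [Nat.add_sub_cancel, erw_sum_shift, ErwRed.MT, ErwRed.AA, mul_sum, ← sum_add_distrib]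
    refine sum_congr rfl fun k _ => ?_
    simp only [erwY]
    ring
  rw [erwV, erwPhat, e1, e2]
  field_simp
  ring


/-- Test of a given memory value `p₀ ∈ (0, 3/4)`: under the null `p = p₀`,
`V_n (p̂_n - p₀)²` converges in distribution to a chi-square law with one degree of
freedom (the law of `ξ²` for `ξ` standard Gaussian); under the alternative `p ≠ p₀`,
`V_n (p̂_n - p₀)² → +∞` almost surely. -/
theorem erw_test_memory_value
    {m0 : MeasurableSpace Ω} (μ : Measure Ω) [IsProbabilityMeasure μ]
    (ℱ : Filtration ℕ m0) (X : ℕ → Ω → ℝ) (p : ℝ)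
    (hERW : IsERW μ ℱ X p) (p₀ : ℝ) (hp₀ : 0 < p₀) (hp₀' : p₀ < 3 / 4) :
    (p = p₀ → ∀ f : ℝ →ᵇ ℝ,
      Tendsto (fun n => ∫ ω, f (erwV X n ω * (erwPhat X n ω - p₀) ^ 2) ∂μ)
        atTop (𝓝 (∫ x, f (x ^ 2) ∂(gaussianReal 0 1)))) ∧
    (p ≠ p₀ →
      ∀ᵐ ω ∂μ, Tendsto (fun n => erwV X n ω * (erwPhat X n ω - p₀) ^ 2) atTop atTop) := by
  have h := erw_red hERW
  have hpos : ∀ n ω, 1 ≤ n → 0 < ErwRed.AA (erwY X) n ω := fun n ω hn => by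
    obtain ⟨m, rfl⟩ := Nat.exists_eq_add_of_le' hn
    exact lt_of_lt_of_le one_pos (h.AA_ge m ω)
  refine ⟨?_, ?_⟩
  · rintro rfl f
    rw [← tendsto_add_atTop_iff_nat 1]
    refine (h.chi (by linarith) f).congr' ?_
    filter_upwards [eventually_ge_atTop 1] with n hn
    refine integral_congr_ae (Eventually.of_forall fun ω => ?_)
    have hA := hpos n ω hn
    simp only
    rw [erw_stat X p p n ω hA]
    congr 1
    rw [sub_self, mul_zero, add_zero]
    field_simp
  · intro hne
    filter_upwards [h.ae_main] with ω hω
    obtain ⟨hA, hM⟩ := hω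
    rw [← tendsto_add_atTop_iff_nat 1]
    have hM' : Tendsto (fun n => ErwRed.MT (erwY X) (erwY X) (fun k => X (k + 2)) (2 * p - 1) n ω
        / ErwRed.AA (erwY X) n ω) atTop (𝓝 0) := by
      rw [tendsto_zero_iff_abs_tendsto_zero] at hM ⊢
      have hM2 := hM.const_mul 2
      rw [mul_zero] at hM2
      refine squeeze_zero' (Eventually.of_forall fun n => abs_nonneg _) ?_ hM2
      filter_upwards [hA.eventually_ge_atTop 1] with n hn
      have h1 : ErwRed.AA (erwY X) (n + 1) ω ≤ 2 * ErwRed.AA (erwY X) n ω := by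
        rw [ErwRed.AA_succ]
        have := h.abs_y n ω
        have : erwY X n ω ^ 2 ≤ 1 := by
          rw [← sq_abs]; exact pow_le_one₀ (abs_nonneg _) this
        linarith
      have h0 : 0 < ErwRed.AA (erwY X) (n + 1) ω := hpos (n + 1) ω (by omega)
      have h0' : 0 < ErwRed.AA (erwY X) n ω := by linarith
      simp only [Function.comp]
      rw [abs_div, abs_div, abs_of_pos h0, abs_of_pos h0', ← mul_div_assoc,
        div_le_div_iff₀ h0' h0]
      nlinarith [abs_nonneg (ErwRed.MT (erwY X) (erwY X) (fun k => X (k + 2)) (2 * p - 1) n ω)]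
    have hsq := (hM'.add_const (2 * (p - p₀))).pow 2
    have hc : 0 < (0 + 2 * (p - p₀)) ^ 2 := by
      have : p - p₀ ≠ 0 := sub_ne_zero.2 hne
      rw [zero_add]
      exact sq_pos_iff.2 (mul_ne_zero two_ne_zero this)
    refine (hA.atTop_mul_pos hc hsq).congr' ?_
    filter_upwards [eventually_ge_atTop 1] with n hn
    exact (erw_stat X p p₀ n ω (hpos n ω hn)).symm
end
end
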